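/- arXiv:1210.1342 — 2 statements merged into one kernel-verified Lean document; each statement's English description precedes it below -/
import Mathlib

section
/- Let α, β ≥ -1/2 with α + β > -1, let M, N ≥ 0 be integers with M + N > 0, let K ≥ 0 be an integer, let ε₁ ∈ {0,1,2}, τ ∈ {0,1} and γ ∈ {τ, 2τ}, and assume ε₁ + K + 2τ - γ ≤ M + N. There exists a constant C depending only on these parameters such that for all θ, φ ∈ (0,π) with θ ≠ φ one has ( ∫₀^∞ |∂_θ^{ε₁} ∂_t^{K} H_t^{α+τ, β+τ}(θ,φ)|² t^{2M+2N-1} dt )^{1/2} ≤ C (θ+φ)^{-γ} (2π-θ-φ)^{-γ} / μ_{α,β}^+(B(θ, |θ-φ|)). -/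
open MeasureTheory Real Set

noncomputable section

/-- The Jacobi measure `μ_{α,β}^+` on `(0,π)`: density
`(sin(θ/2))^(2α+1) (cos(θ/2))^(2β+1)` w.r.t. Lebesgue measure on `(0,π)`. -/
def jacobiMeasure (α β : ℝ) : Measure ℝ :=
  (volume.restrict (Ioo 0 π)).withDensity
    (fun θ => ENNReal.ofReal (Real.sin (θ / 2) ^ (2 * α + 1) * Real.cos (θ / 2) ^ (2 * β + 1)))

/-- The ball `B(θ,r) = (θ-r, θ+r) ∩ (0,π)`. -/
def jacobiBall (θ r : ℝ) : Set ℝ := Ioo (θ - r) (θ + r) ∩ Ioo 0 π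

/-- The measure `Π_α` on `[-1,1]`. -/
def PiMeasure (α : ℝ) : Measure ℝ :=
  if α = -(1 / 2) then (2 : ENNReal)⁻¹ • (Measure.dirac (-1) + Measure.dirac 1)
  else
    (volume.restrict (Icc (-1) 1)).withDensity
      (fun u => ENNReal.ofReal
        (Real.Gamma (α + 1) / (Real.sqrt π * Real.Gamma (α + 1 / 2)) * (1 - u ^ 2) ^ (α - 1 / 2)))

/-- `q(θ,φ,u,v) = 1 - u sin(θ/2) sin(φ/2) - v cos(θ/2) cos(φ/2)`. -/
def qfun (θ φ u v : ℝ) : ℝ :=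
  1 - u * Real.sin (θ / 2) * Real.sin (φ / 2) - v * Real.cos (θ / 2) * Real.cos (φ / 2)

/-- `Ψ^{α,β}(t,s) = sinh(t/2) / (cosh(t/2) - 1 + s)^(α+β+2)`. -/
def Psi (α β t s : ℝ) : ℝ :=
  Real.sinh (t / 2) / (Real.cosh (t / 2) - 1 + s) ^ (α + β + 2)

/-- The Jacobi-Poisson kernel `H_t^{α,β}(θ,φ)`. -/
def Hker (α β t θ φ : ℝ) : ℝ :=
  ((2 : ℝ) ^ (-(α + β + 2)) / (jacobiMeasure α β (Ioo 0 π)).toReal) * Real.sinh (t / 2) *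
    ∫ u, ∫ v, 1 / (Real.cosh (t / 2) - 1 + qfun θ φ u v) ^ (α + β + 2)
      ∂(PiMeasure β) ∂(PiMeasure α)

/-- The symmetrized kernel `H̃_t^{α,β}(θ,φ) = (1/4) sin θ sin φ H_t^{α+1,β+1}(θ,φ)`. -/
def Htilde (α β t θ φ : ℝ) : ℝ :=
  (1 / 4) * Real.sin θ * Real.sin φ * Hker (α + 1) (β + 1) t θ φ

end

namespace JK

noncomputable section

abbrev Fn := ℝ → ℝ → ℝ → ℝ → ℝ → ℝ

def XX (φ θ u v : ℝ) : ℝ :=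
  u * Real.sin (θ / 2) * Real.sin (φ / 2) + v * Real.cos (θ / 2) * Real.cos (φ / 2)

def YY (φ θ u v : ℝ) : ℝ :=
  u * Real.cos (θ / 2) * Real.sin (φ / 2) - v * Real.sin (θ / 2) * Real.cos (φ / 2)

/-- Monomials `sinh^i cosh^j Y^l X^m E^{-(b+k)}` (arguments `φ t θ u v`). -/
def mono (b : ℝ) (i j l m k : ℕ) : Fn := fun φ t θ u v =>
  Real.sinh (t / 2) ^ i * Real.cosh (t / 2) ^ j * YY φ θ u v ^ l * XX φ θ u v ^ m *
    (Real.cosh (t / 2) - XX φ θ u v) ^ (-(b + k))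

def W (b : ℝ) (n : ℕ) : Submodule ℝ Fn :=
  Submodule.span ℝ {f | ∃ i j l m k : ℕ, 2 * k + 1 ≤ n + i + l ∧ i + j ≤ k + 1 ∧
    f = mono b i j l m k}

lemma mono_mem {b : ℝ} {n i j l m k : ℕ} (h1 : 2 * k + 1 ≤ n + i + l) (h2 : i + j ≤ k + 1) :
    mono b i j l m k ∈ W b n :=
  Submodule.subset_span ⟨i, j, l, m, k, h1, h2, rfl⟩

lemma XX_sq_add_YY_sq {φ θ u v : ℝ} (hu : u ∈ Icc (-1 : ℝ) 1) (hv : v ∈ Icc (-1 : ℝ) 1) :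
    XX φ θ u v ^ 2 + YY φ θ u v ^ 2 ≤ 1 := by
  have h1 := Real.sin_sq_add_cos_sq (θ / 2)
  have h2 := Real.sin_sq_add_cos_sq (φ / 2)
  have hu2 : u ^ 2 ≤ 1 := by have := hu.1; have := hu.2; nlinarith
  have hv2 : v ^ 2 ≤ 1 := by have := hv.1; have := hv.2; nlinarith
  have e : XX φ θ u v ^ 2 + YY φ θ u v ^ 2 =
      (Real.sin (θ / 2) ^ 2 + Real.cos (θ / 2) ^ 2) *
      (u ^ 2 * Real.sin (φ / 2) ^ 2 + v ^ 2 * Real.cos (φ / 2) ^ 2) := by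
    unfold XX YY; ring
  rw [e, h1, one_mul]
  nlinarith [mul_le_mul_of_nonneg_right hu2 (sq_nonneg (Real.sin (φ / 2))),
    mul_le_mul_of_nonneg_right hv2 (sq_nonneg (Real.cos (φ / 2)))]

lemma abs_XX_le {φ θ u v : ℝ} (hu : u ∈ Icc (-1 : ℝ) 1) (hv : v ∈ Icc (-1 : ℝ) 1) :
    |XX φ θ u v| ≤ 1 := by
  have := XX_sq_add_YY_sq (φ := φ) (θ := θ) hu hv
  refine abs_le_of_sq_le_sq ?_ zero_le_one
  nlinarith [sq_nonneg (YY φ θ u v)]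

lemma abs_YY_le {φ θ u v : ℝ} (hu : u ∈ Icc (-1 : ℝ) 1) (hv : v ∈ Icc (-1 : ℝ) 1) :
    |YY φ θ u v| ≤ 1 := by
  have := XX_sq_add_YY_sq (φ := φ) (θ := θ) hu hv
  refine abs_le_of_sq_le_sq ?_ zero_le_one
  nlinarith [sq_nonneg (XX φ θ u v)]

lemma cosh_gt {t : ℝ} (ht : 0 < t) : 1 < Real.cosh (t / 2) := by
  rw [Real.one_lt_cosh]; positivity

lemma E_pos {φ t θ u v : ℝ} (ht : 0 < t) (hu : u ∈ Icc (-1 : ℝ) 1) (hv : v ∈ Icc (-1 : ℝ) 1) :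
    0 < Real.cosh (t / 2) - XX φ θ u v := by
  have := cosh_gt ht
  have := (abs_le.1 (abs_XX_le (φ := φ) (θ := θ) hu hv)).2
  linarith

lemma mono_deriv_t (b : ℝ) (i j l m k : ℕ) {φ t θ u v : ℝ} (ht : 0 < t)
    (hu : u ∈ Icc (-1 : ℝ) 1) (hv : v ∈ Icc (-1 : ℝ) 1) :
    HasDerivAt (fun t => mono b i j l m k φ t θ u v)
      (((i / 2 : ℝ) • mono b (i - 1) (j + 1) l m k + (j / 2 : ℝ) • mono b (i + 1) (j - 1) l m k
        + (-(b + k) / 2) • mono b (i + 1) j l m (k + 1)) φ t θ u v) t := by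
  have hE := E_pos (φ := φ) (θ := θ) ht hu hv
  have hd : HasDerivAt (fun t : ℝ => t / 2) (1 / 2) t := (hasDerivAt_id t).div_const 2
  have hs := hd.sinh
  have hc := hd.cosh
  have h1 := ((((hs.pow i).mul (hc.pow j)).mul_const (YY φ θ u v ^ l)).mul_const
    (XX φ θ u v ^ m)).mul
    ((hc.sub_const (XX φ θ u v)).rpow_const (p := -(b + k)) (Or.inl hE.ne'))
  refine h1.congr_deriv ?_
  have e : -(b + (k : ℝ)) - 1 = -(b + ((k + 1 : ℕ) : ℝ)) := by push_cast; ring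
  simp only [mono, Pi.add_apply, Pi.smul_apply, smul_eq_mul, e, Pi.mul_apply, Pi.pow_apply]
  ring

lemma mono_deriv_θ (b : ℝ) (i j l m k : ℕ) {φ t θ u v : ℝ} (ht : 0 < t)
    (hu : u ∈ Icc (-1 : ℝ) 1) (hv : v ∈ Icc (-1 : ℝ) 1) :
    HasDerivAt (fun θ => mono b i j l m k φ t θ u v)
      (((-l / 2 : ℝ) • mono b i j (l - 1) (m + 1) k + (m / 2 : ℝ) • mono b i j (l + 1) (m - 1) k
        + ((b + k) / 2) • mono b i j (l + 1) m (k + 1)) φ t θ u v) θ := by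
  have hE := E_pos (φ := φ) (θ := θ) ht hu hv
  have hd : HasDerivAt (fun t : ℝ => t / 2) (1 / 2) θ := (hasDerivAt_id θ).div_const 2
  have hs := hd.sin
  have hc := hd.cos
  have hX : HasDerivAt (fun θ => XX φ θ u v) (YY φ θ u v / 2) θ := by
    refine (((hs.const_mul u).mul_const (Real.sin (φ / 2))).add
      ((hc.const_mul v).mul_const (Real.cos (φ / 2)))).congr_deriv ?_
    unfold YY; ring
  have hY : HasDerivAt (fun θ => YY φ θ u v) (-XX φ θ u v / 2) θ := by
    refine (((hc.const_mul u).mul_const (Real.sin (φ / 2))).sub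
      ((hs.const_mul v).mul_const (Real.cos (φ / 2)))).congr_deriv ?_
    unfold XX; ring
  have h1 := ((((hY.pow l).const_mul (Real.sinh (t / 2) ^ i * Real.cosh (t / 2) ^ j))).mul
    (hX.pow m)).mul
    ((hX.const_sub (Real.cosh (t / 2))).rpow_const (p := -(b + k)) (Or.inl hE.ne'))
  refine h1.congr_deriv ?_
  have e : -(b + (k : ℝ)) - 1 = -(b + ((k + 1 : ℕ) : ℝ)) := by push_cast; ring
  simp only [mono, Pi.add_apply, Pi.smul_apply, smul_eq_mul, e, Pi.mul_apply, Pi.pow_apply]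
  ring

lemma W_deriv_t {b : ℝ} {n : ℕ} {f : Fn} (hf : f ∈ W b n) :
    ∃ g ∈ W b (n + 1), ∀ φ t θ u v : ℝ, 0 < t → u ∈ Icc (-1 : ℝ) 1 → v ∈ Icc (-1 : ℝ) 1 →
      HasDerivAt (fun t => f φ t θ u v) (g φ t θ u v) t := by
  induction hf using Submodule.span_induction with
  | mem f hf =>
    obtain ⟨i, j, l, m, k, h1, h2, rfl⟩ := hf
    refine ⟨_, ?_, fun φ t θ u v ht hu hv => mono_deriv_t b i j l m k ht hu hv⟩
    refine Submodule.add_mem _ (Submodule.add_mem _ ?_ ?_) ?_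
    · rcases i with _ | i
      · simp
      · exact Submodule.smul_mem _ _ (mono_mem (by omega) (by omega))
    · rcases j with _ | j
      · simp
      · exact Submodule.smul_mem _ _ (mono_mem (by omega) (by omega))
    · exact Submodule.smul_mem _ _ (mono_mem (by omega) (by omega))
  | zero => exact ⟨0, Submodule.zero_mem _, fun φ t θ u v _ _ _ => by
      simpa using hasDerivAt_const t (0 : ℝ)⟩
  | add f g _ _ hf hg =>
    obtain ⟨f', hf', h1⟩ := hf
    obtain ⟨g', hg', h2⟩ := hg
    exact ⟨f' + g', Submodule.add_mem _ hf' hg', fun φ t θ u v ht hu hv =>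
      (h1 φ t θ u v ht hu hv).add (h2 φ t θ u v ht hu hv)⟩
  | smul c f _ hf =>
    obtain ⟨f', hf', h1⟩ := hf
    exact ⟨c • f', Submodule.smul_mem _ _ hf', fun φ t θ u v ht hu hv =>
      (h1 φ t θ u v ht hu hv).const_mul c⟩

lemma W_deriv_θ {b : ℝ} {n : ℕ} {f : Fn} (hf : f ∈ W b n) :
    ∃ g ∈ W b (n + 1), ∀ φ t θ u v : ℝ, 0 < t → u ∈ Icc (-1 : ℝ) 1 → v ∈ Icc (-1 : ℝ) 1 →
      HasDerivAt (fun θ => f φ t θ u v) (g φ t θ u v) θ := by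
  induction hf using Submodule.span_induction with
  | mem f hf =>
    obtain ⟨i, j, l, m, k, h1, h2, rfl⟩ := hf
    refine ⟨_, ?_, fun φ t θ u v ht hu hv => mono_deriv_θ b i j l m k ht hu hv⟩
    refine Submodule.add_mem _ (Submodule.add_mem _ ?_ ?_) ?_
    · rcases l with _ | l
      · simp
      · exact Submodule.smul_mem _ _ (mono_mem (by omega) (by omega))
    · rcases m with _ | m
      · simp
      · exact Submodule.smul_mem _ _ (mono_mem (by omega) (by omega))
    · exact Submodule.smul_mem _ _ (mono_mem (by omega) (by omega))
  | zero => exact ⟨0, Submodule.zero_mem _, fun φ t θ u v _ _ _ => by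
      simpa using hasDerivAt_const θ (0 : ℝ)⟩
  | add f g _ _ hf hg =>
    obtain ⟨f', hf', h1⟩ := hf
    obtain ⟨g', hg', h2⟩ := hg
    exact ⟨f' + g', Submodule.add_mem _ hf' hg', fun φ t θ u v ht hu hv =>
      (h1 φ t θ u v ht hu hv).add (h2 φ t θ u v ht hu hv)⟩
  | smul c f _ hf =>
    obtain ⟨f', hf', h1⟩ := hf
    exact ⟨c • f', Submodule.smul_mem _ _ hf', fun φ t θ u v ht hu hv =>
      (h1 φ t θ u v ht hu hv).const_mul c⟩

lemma W_meas {b : ℝ} {n : ℕ} {f : Fn} (hf : f ∈ W b n) (φ t θ : ℝ) :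
    Measurable (fun z : ℝ × ℝ => f φ t θ z.1 z.2) := by
  induction hf using Submodule.span_induction with
  | mem f hf =>
    obtain ⟨i, j, l, m, k, h1, h2, rfl⟩ := hf
    unfold mono XX YY
    fun_prop
  | zero => exact measurable_const
  | add f g _ _ hf hg => exact hf.add hg
  | smul c f _ hf => exact hf.const_mul c

lemma W_loc {b : ℝ} (hb : 0 ≤ b) {n : ℕ} {f : Fn} (hf : f ∈ W b n) {t₀ : ℝ} (ht₀ : 0 < t₀) :
    ∃ C : ℝ, ∀ φ t θ u v : ℝ, t ∈ Icc (t₀ / 2) (2 * t₀) → u ∈ Icc (-1 : ℝ) 1 →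
      v ∈ Icc (-1 : ℝ) 1 → |f φ t θ u v| ≤ C := by
  induction hf using Submodule.span_induction with
  | mem f hf =>
    obtain ⟨i, j, l, m, k, h1, h2, rfl⟩ := hf
    refine ⟨Real.cosh t₀ ^ i * Real.cosh t₀ ^ j * 1 ^ l * 1 ^ m *
      (Real.cosh (t₀ / 2 / 2) - 1) ^ (-(b + k)), fun φ t θ u v ht hu hv => ?_⟩
    have htp : 0 < t := by have := ht.1; linarith
    have hX := abs_XX_le (φ := φ) (θ := θ) hu hv
    have hY := abs_YY_le (φ := φ) (θ := θ) hu hv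
    have hc : Real.cosh (t / 2) ≤ Real.cosh t₀ := by
      rw [Real.cosh_le_cosh, abs_of_pos (by linarith), abs_of_pos ht₀]; linarith [ht.2]
    have hc2 : Real.cosh (t₀ / 2 / 2) ≤ Real.cosh (t / 2) := by
      rw [Real.cosh_le_cosh, abs_of_pos (by linarith), abs_of_pos (by linarith)]; linarith [ht.1]
    have hc1 : 1 < Real.cosh (t₀ / 2 / 2) := cosh_gt (by linarith)
    have hs : |Real.sinh (t / 2)| ≤ Real.cosh t₀ := by
      rw [abs_of_nonneg (Real.sinh_nonneg_iff.2 (by linarith))]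
      exact (Real.sinh_lt_cosh _).le.trans hc
    have hE := E_pos (φ := φ) (θ := θ) htp hu hv
    unfold mono
    simp only [abs_mul, abs_pow]
    rw [abs_of_pos (Real.cosh_pos (t / 2)), abs_of_pos (Real.rpow_pos_of_pos hE _)]
    have : (Real.cosh (t / 2) - XX φ θ u v) ^ (-(b + k)) ≤
        (Real.cosh (t₀ / 2 / 2) - 1) ^ (-(b + k)) := by
      apply Real.rpow_le_rpow_of_nonpos (by linarith)
      · have := (abs_le.1 hX).2; linarith
      · have : (0 : ℝ) ≤ k := by positivity
        linarith
    have := (Real.cosh_pos (t / 2)).le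
    have := (Real.cosh_pos t₀).le
    gcongr
  | zero => exact ⟨0, by simp⟩
  | add f g _ _ hf hg =>
    obtain ⟨C, hC⟩ := hf
    obtain ⟨C', hC'⟩ := hg
    exact ⟨C + C', fun φ t θ u v ht hu hv => (abs_add_le _ _).trans
      (add_le_add (hC φ t θ u v ht hu hv) (hC' φ t θ u v ht hu hv))⟩
  | smul c f _ hf =>
    obtain ⟨C, hC⟩ := hf
    refine ⟨|c| * C, fun φ t θ u v ht hu hv => ?_⟩
    simp only [Pi.smul_apply, smul_eq_mul, abs_mul]
    exact mul_le_mul_of_nonneg_left (hC φ t θ u v ht hu hv) (abs_nonneg _)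

lemma W_bound {b : ℝ} {n : ℕ} {f : Fn} (hf : f ∈ W b n) :
    ∃ C : ℝ, 0 ≤ C ∧ ∀ φ t θ u v : ℝ, 0 < t → u ∈ Icc (-1 : ℝ) 1 →
      v ∈ Icc (-1 : ℝ) 1 →
      (Real.cosh (t / 2) ≤ 2 → |f φ t θ u v| ≤
        C * (Real.cosh (t / 2) - XX φ θ u v) ^ (-(b - 1 / 2 + n / 2))) ∧
      (2 ≤ Real.cosh (t / 2) → |f φ t θ u v| ≤
        C * (Real.cosh (t / 2) - XX φ θ u v) ^ (1 - b)) := by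
  induction hf using Submodule.span_induction with
  | mem f hf =>
    obtain ⟨i, j, l, m, k, h1, h2, rfl⟩ := hf
    have h1' : (2 * k + 1 : ℝ) ≤ n + i + l := by exact_mod_cast h1
    have h2' : (i + j : ℝ) ≤ k + 1 := by exact_mod_cast h2
    refine ⟨Real.sqrt 3 ^ i * 2 ^ j * Real.sqrt 2 ^ l *
      3 ^ (((i : ℝ) + l) / 2 - (b + k) + (b - 1 / 2 + n / 2)) + 2 ^ (i + j),
      by positivity, fun φ t θ u v ht hu hv => ?_⟩
    have hX := abs_XX_le (φ := φ) (θ := θ) hu hv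
    have hX' := abs_le.1 hX
    have hY := abs_YY_le (φ := φ) (θ := θ) hu hv
    have hXY := XX_sq_add_YY_sq (φ := φ) (θ := θ) hu hv
    have hE := E_pos (φ := φ) (θ := θ) ht hu hv
    have hc := cosh_gt ht
    have hs0 : 0 ≤ Real.sinh (t / 2) := Real.sinh_nonneg_iff.2 (by linarith)
    have hs2 := Real.cosh_sq (t / 2)
    have e : |mono b i j l m k φ t θ u v| = Real.sinh (t / 2) ^ i * Real.cosh (t / 2) ^ j *
        |YY φ θ u v| ^ l * |XX φ θ u v| ^ m * (Real.cosh (t / 2) - XX φ θ u v) ^ (-(b + k)) := by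
      unfold mono
      simp only [abs_mul, abs_pow]
      rw [abs_of_pos (Real.cosh_pos (t / 2)), abs_of_pos (Real.rpow_pos_of_pos hE _),
        abs_of_nonneg hs0]
    rw [e]
    set E := Real.cosh (t / 2) - XX φ θ u v with hEdef
    have hXm : |XX φ θ u v| ^ m ≤ 1 := pow_le_one₀ (abs_nonneg _) hX
    constructor
    · intro hc2
      have hs : Real.sinh (t / 2) ≤ Real.sqrt 3 * Real.sqrt E := by
        rw [← Real.sqrt_mul (by norm_num)]
        apply Real.le_sqrt_of_sq_le
        nlinarith
      have hYb : |YY φ θ u v| ≤ Real.sqrt 2 * Real.sqrt E := by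
        rw [← Real.sqrt_mul (by norm_num)]
        apply Real.abs_le_sqrt
        nlinarith
      calc _ ≤ (Real.sqrt 3 * Real.sqrt E) ^ i * 2 ^ j * (Real.sqrt 2 * Real.sqrt E) ^ l * 1 *
            E ^ (-(b + k)) := by
            have := (Real.cosh_pos (t / 2)).le
            gcongr
        _ = Real.sqrt 3 ^ i * 2 ^ j * Real.sqrt 2 ^ l * (E ^ (((i : ℝ) + l) / 2 - (b + k) +
            (b - 1 / 2 + n / 2)) * E ^ (-(b - 1 / 2 + n / 2))) := by
            rw [← Real.rpow_add hE]
            have : ((i : ℝ) + l) / 2 - (b + k) + (b - 1 / 2 + n / 2) + -(b - 1 / 2 + n / 2)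
              = (1 / 2) * i + (1 / 2) * l + -(b + k) := by ring
            rw [this, Real.rpow_add hE, Real.rpow_add hE, Real.rpow_mul_natCast hE.le,
              Real.rpow_mul_natCast hE.le, ← Real.sqrt_eq_rpow, mul_pow, mul_pow]
            ring
        _ ≤ Real.sqrt 3 ^ i * 2 ^ j * Real.sqrt 2 ^ l * (3 ^ (((i : ℝ) + l) / 2 - (b + k) +
            (b - 1 / 2 + n / 2)) * E ^ (-(b - 1 / 2 + n / 2))) := by
            have : E ≤ 3 := by linarith
            have : (0 : ℝ) ≤ ((i : ℝ) + l) / 2 - (b + k) + (b - 1 / 2 + n / 2) := by linarith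
            gcongr
        _ ≤ _ := by
            have : 0 ≤ (2 : ℝ) ^ (i + j) * E ^ (-(b - 1 / 2 + n / 2)) := by positivity
            linarith
    · intro hc2
      have hcE : Real.cosh (t / 2) ≤ 2 * E := by linarith
      have hsE : Real.sinh (t / 2) ≤ 2 * E := (Real.sinh_lt_cosh _).le.trans hcE
      calc _ ≤ (2 * E) ^ i * (2 * E) ^ j * 1 * 1 * E ^ (-(b + k)) := by
            have := (Real.cosh_pos (t / 2)).le
            have : |YY φ θ u v| ^ l ≤ 1 := pow_le_one₀ (abs_nonneg _) hY
            gcongr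
        _ = 2 ^ (i + j) * E ^ ((i : ℝ) + j - (b + k)) := by
            have : (i : ℝ) + j - (b + k) = ((i + j : ℕ) : ℝ) + -(b + k) := by push_cast; ring
            rw [this, Real.rpow_add hE, Real.rpow_natCast, ← pow_add, mul_pow]
            ring
        _ ≤ 2 ^ (i + j) * E ^ (1 - b) := by
            have : 1 ≤ E := by linarith
            exact mul_le_mul_of_nonneg_left (Real.rpow_le_rpow_of_exponent_le this (by linarith))
              (by positivity)
        _ ≤ _ := by
            rw [add_mul]
            have : 0 ≤ Real.sqrt 3 ^ i * 2 ^ j * Real.sqrt 2 ^ l *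
              3 ^ (((i : ℝ) + l) / 2 - (b + k) + (b - 1 / 2 + n / 2)) * E ^ (1 - b) := by positivity
            linarith
  | zero => exact ⟨0, le_rfl, by simp⟩
  | add f g _ _ hf hg =>
    obtain ⟨C, hC0, hC⟩ := hf
    obtain ⟨C', hC0', hC'⟩ := hg
    refine ⟨C + C', by positivity, fun φ t θ u v ht hu hv => ⟨fun h => ?_, fun h => ?_⟩⟩
    · rw [add_mul]
      exact (abs_add_le _ _).trans
        (add_le_add ((hC φ t θ u v ht hu hv).1 h) ((hC' φ t θ u v ht hu hv).1 h))
    · rw [add_mul]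
      exact (abs_add_le _ _).trans
        (add_le_add ((hC φ t θ u v ht hu hv).2 h) ((hC' φ t θ u v ht hu hv).2 h))
  | smul c f _ hf =>
    obtain ⟨C, hC0, hC⟩ := hf
    refine ⟨|c| * C, by positivity, fun φ t θ u v ht hu hv => ?_⟩
    simp only [Pi.smul_apply, smul_eq_mul, abs_mul, mul_assoc]
    exact ⟨fun h => mul_le_mul_of_nonneg_left ((hC φ t θ u v ht hu hv).1 h) (abs_nonneg _),
      fun h => mul_le_mul_of_nonneg_left ((hC φ t θ u v ht hu hv).2 h) (abs_nonneg _)⟩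


/-! ### The measures `Π_ν` -/

lemma pow_integrable {l : ℝ} (hl : 0 < l) :
    IntervalIntegrable (fun w : ℝ => (w * (2 - w)) ^ (l - 1)) volume 0 1 := by
  have h1 : IntervalIntegrable (fun w : ℝ => w ^ (l - 1) * (2 - w) ^ (l - 1)) volume 0 1 := by
    refine (intervalIntegral.intervalIntegrable_rpow' (by linarith)).mul_continuousOn ?_
    refine ContinuousOn.rpow_const (by fun_prop) ?_
    intro x hx
    rw [uIcc_of_le zero_le_one] at hx
    left; have := hx.2; intro h; linarith
  refine h1.congr ?_
  intro x hx
  rw [uIoc_of_le zero_le_one] at hx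
  exact (Real.mul_rpow hx.1.le (by linarith [hx.2])).symm

lemma dens_integrable_right {l : ℝ} (hl : 0 < l) :
    IntervalIntegrable (fun u : ℝ => (1 - u ^ 2) ^ (l - 1)) volume 0 1 := by
  have h := ((pow_integrable hl).comp_sub_left 1).symm
  simp only [sub_zero, sub_self] at h
  refine h.congr ?_
  intro x _
  simp only
  congr 1; ring

lemma dens_integrable_left {l : ℝ} (hl : 0 < l) :
    IntervalIntegrable (fun u : ℝ => (1 - u ^ 2) ^ (l - 1)) volume (-1) 0 := by
  have h := ((pow_integrable hl).comp_add_right 1)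
  norm_num at h
  refine h.congr ?_
  intro x _
  simp only
  congr 1; ring

lemma base_integrable {l δ D A : ℝ} (hl : 0 < l) (hD : 0 < D) (hA : 0 ≤ A) :
    IntervalIntegrable (fun w : ℝ => w ^ (l - 1) * (D + w * A) ^ (-(l + δ))) volume 0 1 := by
  refine (intervalIntegral.intervalIntegrable_rpow' (by linarith)).mul_continuousOn ?_
  refine ContinuousOn.rpow_const (by fun_prop) ?_
  intro x hx
  rw [uIcc_of_le zero_le_one] at hx
  left; have := mul_nonneg hx.1 hA; intro h; linarith

lemma base_bound {l δ D A : ℝ} (hl : 0 < l) (hδ : 0 < δ) (hD : 0 < D) (hA : 0 ≤ A) :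
    ∫ w in (0 : ℝ)..1, w ^ (l - 1) * (D + w * A) ^ (-(l + δ)) ≤
      2 / min l δ * D ^ (-δ) * (D + A) ^ (-l) := by
  have hm : 0 < min l δ := lt_min hl hδ
  set G : ℝ → ℝ := fun w => (min l δ)⁻¹ * D ^ (-δ) *
    (w ^ l * (D + w * A) ^ (-l) * (2 - D ^ δ * (D + w * A) ^ (-δ))) with hG
  have hpos : ∀ w : ℝ, 0 ≤ w → 0 < D + w * A := fun w hw => by
    have := mul_nonneg hw hA; linarith
  have key := intervalIntegral.integral_le_sub_of_hasDeriv_right_of_le (a := 0) (b := 1)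
    (g := G) (g' := fun w => (min l δ)⁻¹ * D ^ (-δ) *
      ((l * w ^ (l - 1) * (D + w * A) ^ (-l) + w ^ l * (A * (-l) * (D + w * A) ^ (-l - 1))) *
        (2 - D ^ δ * (D + w * A) ^ (-δ)) +
        w ^ l * (D + w * A) ^ (-l) * (-(D ^ δ * (A * (-δ) * (D + w * A) ^ (-δ - 1))))))
    (φ := fun w => w ^ (l - 1) * (D + w * A) ^ (-(l + δ))) zero_le_one ?_ ?_ ?_ ?_
  · refine key.trans ?_
    have h0 : G 0 = 0 := by simp [hG, Real.zero_rpow hl.ne']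
    have h1 : G 1 ≤ 2 / min l δ * D ^ (-δ) * (D + A) ^ (-l) := by
      simp only [hG, Real.one_rpow, one_mul]
      have hDA : 0 < D + A := by linarith
      have : 2 - D ^ δ * (D + A) ^ (-δ) ≤ 2 := by
        have : 0 ≤ D ^ δ * (D + A) ^ (-δ) := by positivity
        linarith
      calc _ ≤ (min l δ)⁻¹ * D ^ (-δ) * ((D + A) ^ (-l) * 2) := by gcongr
        _ = _ := by ring
    linarith
  · refine continuousOn_const.mul (((continuousOn_id.rpow_const fun x _ => Or.inr hl.le).mul
      (ContinuousOn.rpow_const (by fun_prop) fun x hx => Or.inl (hpos x hx.1).ne')).mul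
      (continuousOn_const.sub (continuousOn_const.mul
      (ContinuousOn.rpow_const (by fun_prop) fun x hx => Or.inl (hpos x hx.1).ne'))))
  · intro w hw
    have hE := hpos w hw.1.le
    have hlin : HasDerivAt (fun w : ℝ => D + w * A) A w := by
      simpa using ((hasDerivAt_id w).mul_const A).const_add D
    have hw' : HasDerivAt (fun w : ℝ => w ^ l) (l * w ^ (l - 1)) w :=
      Real.hasDerivAt_rpow_const (Or.inl hw.1.ne')
    exact (((hw'.mul (hlin.rpow_const (p := -l) (Or.inl hE.ne'))).mul
      (((hlin.rpow_const (p := -δ) (Or.inl hE.ne')).const_mul (D ^ δ)).const_sub 2)).const_mul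
      _).hasDerivWithinAt
  · exact (intervalIntegrable_iff_integrableOn_Icc_of_le zero_le_one).1 (base_integrable hl hD hA)
  · intro w hw
    have hE := hpos w hw.1.le
    have hw0 := hw.1
    set E := D + w * A with hEd
    have e1 : w ^ l = w * w ^ (l - 1) := by
      rw [mul_comm, ← Real.rpow_add_one hw0.ne']; congr 1; ring
    have e2 : E ^ (-l) = E * E ^ (-l - 1) := by
      rw [mul_comm, ← Real.rpow_add_one hE.ne']; congr 1; ring
    have e3 : E ^ (-δ - 1) = E ^ (-δ) * E⁻¹ := by
      rw [← Real.rpow_neg_one, ← Real.rpow_add hE]; congr 1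
    have e4 : E ^ (-(l + δ)) = E * E ^ (-l - 1) * E ^ (-δ) := by
      rw [← e2, ← Real.rpow_add hE]; congr 1; ring
    have e5 : D ^ (-δ) * D ^ δ = 1 := by rw [← Real.rpow_add hD]; simp
    rw [e1, e2, e3, e4]
    have hx : D ^ δ * E ^ (-δ) ≤ 1 := by
      have : E ^ (-δ) ≤ D ^ (-δ) := Real.rpow_le_rpow_of_nonpos hD (by
        have := mul_nonneg hw0.le hA; linarith) (by linarith)
      calc _ ≤ D ^ δ * D ^ (-δ) := by gcongr
        _ = 1 := by rw [mul_comm, e5]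
    have hp : 0 < w ^ (l - 1) := Real.rpow_pos_of_pos hw0 _
    have hq : 0 < E ^ (-l - 1) := Real.rpow_pos_of_pos hE _
    have hr : 0 < E ^ (-δ) := Real.rpow_pos_of_pos hE _
    have hd : 0 < D ^ (-δ) := Real.rpow_pos_of_pos hD _
    have hd' : 0 < D ^ δ := Real.rpow_pos_of_pos hD _
    generalize w ^ (l - 1) = P at *
    generalize E ^ (-l - 1) = Q at *
    generalize E ^ (-δ) = R at *
    have : (min l δ)⁻¹ * D ^ (-δ) * ((l * P * (E * Q) + w * P * (A * -l * Q)) *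
        (2 - D ^ δ * R) + w * P * (E * Q) * -(D ^ δ * (A * -δ * (R * E⁻¹)))) =
        (min l δ)⁻¹ * D ^ (-δ) * (P * Q) * (l * D * (2 - D ^ δ * R) + δ * (w * A) * (D ^ δ * R)) := by
      rw [hEd]; rw [hEd] at hE; field_simp; ring
    rw [this]
    have hwA := mul_nonneg hw0.le hA
    have h3 : min l δ * E * (D ^ δ * R) ≤
        l * D * (2 - D ^ δ * R) + δ * (w * A) * (D ^ δ * R) := by
      have hXp : 0 < D ^ δ * R := by positivity
      have ha : l * D * (D ^ δ * R) ≤ l * D * (2 - D ^ δ * R) := by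
        apply mul_le_mul_of_nonneg_left _ (by positivity); linarith
      have hb : min l δ * D * (D ^ δ * R) ≤ l * D * (D ^ δ * R) := by
        have := min_le_left l δ; gcongr
      have hc : min l δ * (w * A) * (D ^ δ * R) ≤ δ * (w * A) * (D ^ δ * R) := by
        have := min_le_right l δ; gcongr
      rw [hEd]; linarith
    calc P * (E * Q * R) = (min l δ)⁻¹ * D ^ (-δ) * (P * Q) * (min l δ * E * (D ^ δ * R)) := by
          have : (min l δ)⁻¹ * min l δ = 1 := inv_mul_cancel₀ hm.ne'
          calc _ = ((min l δ)⁻¹ * min l δ) * (D ^ (-δ) * D ^ δ) * (P * (E * Q * R)) := by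
                rw [this, e5]; ring
            _ = _ := by ring
      _ ≤ _ := by gcongr

lemma aux_two_sub {l w : ℝ} (hw : w ∈ Icc (0 : ℝ) 1) : (2 - w) ^ (l - 1) ≤ 2 ^ l + 1 := by
  have h1 : (1 : ℝ) ≤ 2 - w := by linarith [hw.2]
  have h2 : (2 : ℝ) - w ≤ 2 := by linarith [hw.1]
  rcases le_total 0 (l - 1) with h | h
  · calc (2 - w) ^ (l - 1) ≤ 2 ^ (l - 1) := Real.rpow_le_rpow (by linarith) h2 h
      _ ≤ 2 ^ l := Real.rpow_le_rpow_of_exponent_le (by norm_num) (by linarith)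
      _ ≤ _ := by linarith
  · calc (2 - w) ^ (l - 1) ≤ 1 := Real.rpow_le_one_of_one_le_of_nonpos h1 h
      _ ≤ _ := by have : (0 : ℝ) < 2 ^ l := by positivity
                  linarith

lemma two_sided {l δ D A : ℝ} (hl : 0 < l) (hδ : 0 < δ) (hD : 0 < D) (hA : 0 ≤ A) :
    ∫ u in (-1 : ℝ)..1, (1 - u ^ 2) ^ (l - 1) * (D + (1 - u) * A) ^ (-(l + δ)) ≤
      2 * (2 ^ l + 1) * (2 / min l δ) * D ^ (-δ) * (D + A) ^ (-l) := by
  have hcont : ContinuousOn (fun u : ℝ => (D + (1 - u) * A) ^ (-(l + δ))) (Icc (-1) 1) := by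
    refine ContinuousOn.rpow_const (by fun_prop) ?_
    intro x hx
    left
    have : 0 ≤ (1 - x) * A := mul_nonneg (by linarith [hx.2]) hA
    intro h; linarith
  have i1 : IntervalIntegrable (fun u : ℝ => (1 - u ^ 2) ^ (l - 1) *
      (D + (1 - u) * A) ^ (-(l + δ))) volume (-1) 0 := by
    refine (dens_integrable_left hl).mul_continuousOn (hcont.mono ?_)
    rw [uIcc_of_le (by norm_num)]; exact Icc_subset_Icc le_rfl (by norm_num)
  have i2 : IntervalIntegrable (fun u : ℝ => (1 - u ^ 2) ^ (l - 1) *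
      (D + (1 - u) * A) ^ (-(l + δ))) volume 0 1 := by
    refine (dens_integrable_right hl).mul_continuousOn (hcont.mono ?_)
    rw [uIcc_of_le (by norm_num)]; exact Icc_subset_Icc (by norm_num) le_rfl
  rw [← intervalIntegral.integral_add_adjacent_intervals i1 i2]
  have hB := base_bound hl hδ hD hA
  have hI := base_integrable (δ := δ) hl hD hA
  have hpt : ∀ w ∈ Icc (0 : ℝ) 1, (w * (2 - w)) ^ (l - 1) ≤ (2 ^ l + 1) * w ^ (l - 1) := by
    intro w hw
    rw [Real.mul_rpow hw.1 (by linarith [hw.2]), mul_comm]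
    exact mul_le_mul_of_nonneg_right (aux_two_sub hw) (Real.rpow_nonneg hw.1 _)
  have j1 : ∫ u in (-1 : ℝ)..0, (1 - u ^ 2) ^ (l - 1) * (D + (1 - u) * A) ^ (-(l + δ)) ≤
      (2 ^ l + 1) * ∫ w in (0 : ℝ)..1, w ^ (l - 1) * (D + w * A) ^ (-(l + δ)) := by
    have := intervalIntegral.integral_comp_sub_right (a := 0) (b := 1)
      (fun u : ℝ => (1 - u ^ 2) ^ (l - 1) * (D + (1 - u) * A) ^ (-(l + δ))) 1
    rw [zero_sub, sub_self] at this
    rw [← this, ← intervalIntegral.integral_const_mul]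
    apply intervalIntegral.integral_mono_on zero_le_one
    · have := i1.comp_sub_right 1
      rw [neg_add_cancel, zero_add] at this
      exact this
    · exact hI.const_mul _
    · intro w hw
      have e : 1 - (w - 1) ^ 2 = w * (2 - w) := by ring
      have hwA := mul_nonneg hw.1 hA
      have : (D + (1 - (w - 1)) * A) ^ (-(l + δ)) ≤ (D + w * A) ^ (-(l + δ)) := by
        apply Real.rpow_le_rpow_of_nonpos (by linarith) _ (by linarith)
        have : w * A ≤ (1 - (w - 1)) * A := mul_le_mul_of_nonneg_right (by linarith [hw.2]) hA
        linarith
      rw [e, ← mul_assoc]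
      refine mul_le_mul (hpt w hw) this (Real.rpow_nonneg ?_ _) ?_
      · have : 0 ≤ (1 - (w - 1)) * A := mul_nonneg (by linarith [hw.2]) hA
        linarith
      · have := Real.rpow_nonneg hw.1 (l - 1); positivity
  have j2 : ∫ u in (0 : ℝ)..1, (1 - u ^ 2) ^ (l - 1) * (D + (1 - u) * A) ^ (-(l + δ)) ≤
      (2 ^ l + 1) * ∫ w in (0 : ℝ)..1, w ^ (l - 1) * (D + w * A) ^ (-(l + δ)) := by
    have := intervalIntegral.integral_comp_sub_left (a := 0) (b := 1)
      (fun u : ℝ => (1 - u ^ 2) ^ (l - 1) * (D + (1 - u) * A) ^ (-(l + δ))) 1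
    rw [sub_zero, sub_self] at this
    rw [← this, ← intervalIntegral.integral_const_mul]
    apply intervalIntegral.integral_mono_on zero_le_one
    · have := (i2.comp_sub_left 1).symm
      norm_num at this
      exact this.congr fun x _ => by simp
    · exact hI.const_mul _
    · intro w hw
      have e : 1 - (1 - w) ^ 2 = w * (2 - w) := by ring
      have hwA := mul_nonneg hw.1 hA
      rw [e, ← mul_assoc, sub_sub_cancel]
      exact mul_le_mul_of_nonneg_right (hpt w hw) (Real.rpow_nonneg (by linarith) _)
  have h2 : (0 : ℝ) < 2 ^ l + 1 := by positivity
  have := mul_le_mul_of_nonneg_left hB h2.le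
  calc _ ≤ _ := add_le_add (j1.trans this) (j2.trans this)
    _ = _ := by ring

lemma Pi_support (ν : ℝ) : ∀ᵐ u ∂(PiMeasure ν), u ∈ Icc (-1 : ℝ) 1 := by
  unfold PiMeasure
  split_ifs with h
  · apply Measure.ae_smul_measure
    rw [ae_add_measure_iff]
    constructor <;> simp [ae_dirac_eq]
  · exact (withDensity_absolutelyContinuous _ _).ae_le (ae_restrict_mem measurableSet_Icc)

lemma Pi_finite {ν : ℝ} (hν : -(1 / 2) ≤ ν) : IsFiniteMeasure (PiMeasure ν) := by
  unfold PiMeasure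
  split_ifs with h
  · refine Measure.smul_finite _ (by simp)
  · have hl : 0 < ν + 1 / 2 := by
      rcases hν.lt_or_eq with h1 | h1
      · linarith
      · exact absurd h1.symm h
    apply isFiniteMeasure_withDensity_ofReal
    have := ((dens_integrable_left hl).trans (dens_integrable_right hl)).const_mul
      (Real.Gamma (ν + 1) / (√π * Real.Gamma (ν + 1 / 2)))
    rw [intervalIntegrable_iff_integrableOn_Icc_of_le (by norm_num)] at this
    have e : ν + 1 / 2 - 1 = ν - 1 / 2 := by ring
    rw [e] at this
    exact this.2

lemma Pi_bound {ν δ : ℝ} (hν : -(1 / 2) ≤ ν) (hδ : 0 < δ) :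
    ∃ C : ℝ, 0 ≤ C ∧ ∀ D A : ℝ, 0 < D → 0 ≤ A →
      ∫ u, (D + (1 - u) * A) ^ (-(ν + 1 / 2 + δ)) ∂(PiMeasure ν) ≤
        C * D ^ (-δ) * (D + A) ^ (-(ν + 1 / 2)) := by
  by_cases h : ν = -(1 / 2)
  · refine ⟨1, zero_le_one, fun D A hD hA => ?_⟩
    have : IsFiniteMeasure (PiMeasure ν) := Pi_finite hν
    have hb : ∀ᵐ u ∂(PiMeasure ν), (D + (1 - u) * A) ^ (-(ν + 1 / 2 + δ)) ≤ D ^ (-δ) := by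
      filter_upwards [Pi_support ν] with u hu
      have : 0 ≤ (1 - u) * A := mul_nonneg (by linarith [hu.2]) hA
      subst h
      norm_num
      exact Real.rpow_le_rpow_of_nonpos hD (by linarith) (by linarith)
    have hmass : (PiMeasure ν).real univ = 1 := by
      rw [PiMeasure, if_pos h]
      simp [Measure.real]
      rw [ENNReal.inv_two_add_inv_two]
      simp
    calc _ ≤ ∫ u, D ^ (-δ) ∂(PiMeasure ν) := by
          refine integral_mono_of_nonneg ?_ (integrable_const _) hb
          filter_upwards [Pi_support ν] with u hu
          have : 0 ≤ (1 - u) * A := mul_nonneg (by linarith [hu.2]) hA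
          exact Real.rpow_nonneg (by linarith) _
      _ = _ := by
          rw [integral_const, hmass]
          subst h
          norm_num
  · have hl : 0 < ν + 1 / 2 := by
      rcases hν.lt_or_eq with h1 | h1
      · linarith
      · exact absurd h1.symm h
    set c := Real.Gamma (ν + 1) / (√π * Real.Gamma (ν + 1 / 2)) with hc
    have hc0 : 0 ≤ c := by
      have := Real.Gamma_pos_of_pos hl
      have := Real.Gamma_pos_of_pos (show 0 < ν + 1 by linarith)
      positivity
    refine ⟨c * (2 * (2 ^ (ν + 1 / 2) + 1) * (2 / min (ν + 1 / 2) δ)), by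
      have : 0 < min (ν + 1 / 2) δ := lt_min hl hδ
      positivity, fun D A hD hA => ?_⟩
    have := two_sided hl hδ hD hA
    have e : ν + 1 / 2 - 1 = ν - 1 / 2 := by ring
    rw [e] at this
    rw [PiMeasure, if_neg h, integral_withDensity_eq_integral_toReal_smul (by fun_prop) (by simp)]
    calc _ = c * ∫ u in (-1 : ℝ)..1, (1 - u ^ 2) ^ (ν - 1 / 2) *
          (D + (1 - u) * A) ^ (-(ν + 1 / 2 + δ)) := by
          rw [← intervalIntegral.integral_const_mul,
            intervalIntegral.integral_of_le (by norm_num), ← integral_Icc_eq_integral_Ioc]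
          apply setIntegral_congr_fun measurableSet_Icc
          intro u hu
          have h1 : 0 ≤ 1 - u ^ 2 := by have := hu.1; have := hu.2; nlinarith
          have : 0 ≤ c * (1 - u ^ 2) ^ (ν - 1 / 2) := mul_nonneg hc0 (Real.rpow_nonneg h1 _)
          simp only [smul_eq_mul]
          rw [ENNReal.toReal_ofReal this, mul_assoc]
      _ ≤ c * _ := mul_le_mul_of_nonneg_left this hc0
      _ = _ := by ring


/-! ### Differentiation under the integral sign -/

def PP (a c : ℝ) : Measure (ℝ × ℝ) := (PiMeasure a).prod (PiMeasure c)

def II (a c : ℝ) (f : Fn) (φ t θ : ℝ) : ℝ := ∫ z, f φ t θ z.1 z.2 ∂(PP a c)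

lemma PP_finite {a c : ℝ} (ha : -(1 / 2) ≤ a) (hc : -(1 / 2) ≤ c) : IsFiniteMeasure (PP a c) := by
  have := Pi_finite ha
  have := Pi_finite hc
  unfold PP; infer_instance

lemma PP_support {a c : ℝ} (ha : -(1 / 2) ≤ a) (hc : -(1 / 2) ≤ c) :
    ∀ᵐ z ∂(PP a c), z.1 ∈ Icc (-1 : ℝ) 1 ∧ z.2 ∈ Icc (-1 : ℝ) 1 := by
  have := Pi_finite ha
  have := Pi_finite hc
  have h1 := (Measure.quasiMeasurePreserving_fst (μ := PiMeasure a) (ν := PiMeasure c)).ae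
    (Pi_support a)
  have h2 := (Measure.quasiMeasurePreserving_snd (μ := PiMeasure a) (ν := PiMeasure c)).ae
    (Pi_support c)
  exact h1.and h2

lemma W_integrable {a c b : ℝ} (ha : -(1 / 2) ≤ a) (hc : -(1 / 2) ≤ c) (hb : 0 ≤ b) {n : ℕ}
    {f : Fn} (hf : f ∈ W b n) (φ θ : ℝ) {t : ℝ} (ht : 0 < t) :
    Integrable (fun z : ℝ × ℝ => f φ t θ z.1 z.2) (PP a c) := by
  have := PP_finite ha hc
  obtain ⟨C, hC⟩ := W_loc hb hf ht
  refine Integrable.of_bound (W_meas hf φ t θ).aestronglyMeasurable C ?_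
  filter_upwards [PP_support ha hc] with z hz
  exact hC φ t θ z.1 z.2 ⟨by linarith, by linarith⟩ hz.1 hz.2

lemma II_deriv_t {a c b : ℝ} (ha : -(1 / 2) ≤ a) (hc : -(1 / 2) ≤ c) (hb : 0 ≤ b) {n : ℕ}
    {f : Fn} (hf : f ∈ W b n) :
    ∃ g ∈ W b (n + 1), ∀ φ t θ : ℝ, 0 < t →
      HasDerivAt (fun t => II a c f φ t θ) (II a c g φ t θ) t := by
  obtain ⟨g, hg, hfg⟩ := W_deriv_t hf
  refine ⟨g, hg, fun φ t θ ht => ?_⟩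
  have := PP_finite ha hc
  obtain ⟨C, hC⟩ := W_loc hb hg ht
  refine (hasDerivAt_integral_of_dominated_loc_of_deriv_le (s := Icc (t / 2) (2 * t))
    (μ := PP a c) (F := fun t z => f φ t θ z.1 z.2) (x₀ := t)
    (F' := fun t (z : ℝ × ℝ) => g φ t θ z.1 z.2) (bound := fun _ => C)
    (Icc_mem_nhds (by linarith) (by linarith)) ?_ ?_ ?_ ?_ ?_ ?_).2
  · exact Filter.Eventually.of_forall fun t => (W_meas hf φ t θ).aestronglyMeasurable
  · exact W_integrable ha hc hb hf φ θ ht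
  · exact (W_meas hg φ t θ).aestronglyMeasurable
  · filter_upwards [PP_support ha hc] with z hz x hx
    exact hC φ x θ z.1 z.2 hx hz.1 hz.2
  · exact integrable_const _
  · filter_upwards [PP_support ha hc] with z hz x hx
    exact hfg φ x θ z.1 z.2 (by linarith [hx.1]) hz.1 hz.2

lemma II_deriv_θ {a c b : ℝ} (ha : -(1 / 2) ≤ a) (hc : -(1 / 2) ≤ c) (hb : 0 ≤ b) {n : ℕ}
    {f : Fn} (hf : f ∈ W b n) :
    ∃ g ∈ W b (n + 1), ∀ φ t θ : ℝ, 0 < t →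
      HasDerivAt (fun θ => II a c f φ t θ) (II a c g φ t θ) θ := by
  obtain ⟨g, hg, hfg⟩ := W_deriv_θ hf
  refine ⟨g, hg, fun φ t θ ht => ?_⟩
  have := PP_finite ha hc
  obtain ⟨C, hC⟩ := W_loc hb hg ht
  refine (hasDerivAt_integral_of_dominated_loc_of_deriv_le (s := univ)
    (μ := PP a c) (F := fun θ z => f φ t θ z.1 z.2) (x₀ := θ)
    (F' := fun θ (z : ℝ × ℝ) => g φ t θ z.1 z.2) (bound := fun _ => C)
    Filter.univ_mem ?_ ?_ ?_ ?_ ?_ ?_).2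
  · exact Filter.Eventually.of_forall fun θ => (W_meas hf φ t θ).aestronglyMeasurable
  · exact W_integrable ha hc hb hf φ θ ht
  · exact (W_meas hg φ t θ).aestronglyMeasurable
  · filter_upwards [PP_support ha hc] with z hz x _
    exact hC φ t x z.1 z.2 ⟨by linarith, by linarith⟩ hz.1 hz.2
  · exact integrable_const _
  · filter_upwards [PP_support ha hc] with z hz x _
    exact hfg φ t x z.1 z.2 ht hz.1 hz.2

lemma Hker_eq {a c : ℝ} (ha : -(1 / 2) ≤ a) (hc : -(1 / 2) ≤ c) (φ θ : ℝ) {t : ℝ} (ht : 0 < t) :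
    Hker a c t θ φ = ((2 : ℝ) ^ (-(a + c + 2)) / (jacobiMeasure a c (Ioo 0 π)).toReal) *
      II a c (mono (a + c + 2) 1 0 0 0 0) φ t θ := by
  have hb : 0 ≤ a + c + 2 := by linarith
  have h1 : Integrable (fun z : ℝ × ℝ => mono (a + c + 2) 1 0 0 0 0 φ t θ z.1 z.2)
      ((PiMeasure a).prod (PiMeasure c)) :=
    W_integrable ha hc hb (mono_mem (n := 0) (by norm_num) (by norm_num)) φ θ ht
  have := Pi_finite ha
  have := Pi_finite hc
  unfold Hker II PP
  rw [integral_prod _ h1, mul_assoc, ← integral_const_mul]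
  congr 1
  apply integral_congr_ae
  filter_upwards [Pi_support a] with u hu
  rw [← integral_const_mul]
  apply integral_congr_ae
  filter_upwards [Pi_support c] with v hv
  have hE := E_pos (φ := φ) (θ := θ) ht hu hv
  have e : Real.cosh (t / 2) - 1 + qfun θ φ u v = Real.cosh (t / 2) - XX φ θ u v := by
    unfold qfun XX; ring
  simp only [mono, e, pow_one, pow_zero, mul_one, Nat.cast_zero, add_zero]
  rw [Real.rpow_neg hE.le, one_div]

lemma iter_t {a c : ℝ} (ha : -(1 / 2) ≤ a) (hc : -(1 / 2) ≤ c) (K : ℕ) :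
    ∃ g ∈ W (a + c + 2) K, ∀ φ t θ : ℝ, 0 < t →
      iteratedDeriv K (fun t' => Hker a c t' θ φ) t =
      ((2 : ℝ) ^ (-(a + c + 2)) / (jacobiMeasure a c (Ioo 0 π)).toReal) * II a c g φ t θ := by
  induction K with
  | zero =>
    refine ⟨mono (a + c + 2) 1 0 0 0 0, mono_mem (by norm_num) (by norm_num),
      fun φ t θ ht => ?_⟩
    rw [iteratedDeriv_zero]
    exact Hker_eq ha hc φ θ ht
  | succ K ih =>
    obtain ⟨g, hg, h⟩ := ih
    obtain ⟨g', hg', h'⟩ := II_deriv_t ha hc (by linarith) hg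
    refine ⟨g', hg', fun φ t θ ht => ?_⟩
    rw [iteratedDeriv_succ]
    rw [Filter.EventuallyEq.deriv_eq (f := fun t => ((2 : ℝ) ^ (-(a + c + 2)) /
      (jacobiMeasure a c (Ioo 0 π)).toReal) * II a c g φ t θ)]
    · exact ((h' φ t θ ht).const_mul _).deriv
    · filter_upwards [Ioi_mem_nhds ht] with s hs
      exact h φ s θ hs

lemma iter_all {a c : ℝ} (ha : -(1 / 2) ≤ a) (hc : -(1 / 2) ≤ c) (K e : ℕ) :
    ∃ g ∈ W (a + c + 2) (K + e), ∀ φ t θ : ℝ, 0 < t →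
      iteratedDeriv e (fun θ' => iteratedDeriv K (fun t' => Hker a c t' θ' φ) t) θ =
      ((2 : ℝ) ^ (-(a + c + 2)) / (jacobiMeasure a c (Ioo 0 π)).toReal) * II a c g φ t θ := by
  induction e with
  | zero =>
    obtain ⟨g, hg, h⟩ := iter_t ha hc K
    refine ⟨g, hg, fun φ t θ ht => ?_⟩
    rw [iteratedDeriv_zero]
    exact h φ t θ ht
  | succ e ih =>
    obtain ⟨g, hg, h⟩ := ih
    obtain ⟨g', hg', h'⟩ := II_deriv_θ ha hc (by linarith) hg
    refine ⟨g', hg', fun φ t θ ht => ?_⟩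
    rw [iteratedDeriv_succ]
    have : iteratedDeriv e (fun θ' => iteratedDeriv K (fun t' => Hker a c t' θ' φ) t) =
        fun θ => ((2 : ℝ) ^ (-(a + c + 2)) / (jacobiMeasure a c (Ioo 0 π)).toReal) *
          II a c g φ t θ := by
      funext x; exact h φ t x ht
    rw [this]
    exact ((h' φ t θ ht).const_mul _).deriv


/-! ### Kernel bounds -/

lemma single_integrable {ν D A p : ℝ} (hν : -(1 / 2) ≤ ν) (hD : 0 < D) (hA : 0 ≤ A) (hp : 0 ≤ p) :
    Integrable (fun u => (D + (1 - u) * A) ^ (-p)) (PiMeasure ν) := by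
  have := Pi_finite hν
  refine Integrable.of_bound (Measurable.aestronglyMeasurable (by fun_prop)) (D ^ (-p)) ?_
  filter_upwards [Pi_support ν] with u hu
  have : 0 ≤ (1 - u) * A := mul_nonneg (by linarith [hu.2]) hA
  rw [Real.norm_of_nonneg (Real.rpow_nonneg (by linarith) _)]
  exact Real.rpow_le_rpow_of_nonpos hD (by linarith) (by linarith)

lemma II_bound {a c : ℝ} (ha : -(1 / 2) ≤ a) (hc : -(1 / 2) ≤ c) {n : ℕ} {f : Fn}
    (hf : f ∈ W (a + c + 2) n) :
    ∃ C : ℝ, 0 ≤ C ∧ ∀ φ t θ : ℝ, φ ∈ Ioo 0 π → θ ∈ Ioo 0 π → 0 < t →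
      (Real.cosh (t / 2) ≤ 2 → |II a c f φ t θ| ≤
        C * (Real.cosh (t / 2) - Real.cos ((θ - φ) / 2)) ^ (-((1 + n) / 2 : ℝ)) *
        (Real.cosh (t / 2) - Real.cos ((θ - φ) / 2) + Real.sin (θ / 2) * Real.sin (φ / 2)) ^
          (-(a + 1 / 2)) *
        (Real.cosh (t / 2) - Real.cos ((θ - φ) / 2) + Real.cos (θ / 2) * Real.cos (φ / 2)) ^
          (-(c + 1 / 2))) ∧
      (2 ≤ Real.cosh (t / 2) → |II a c f φ t θ| ≤ C * Real.exp (-((a + c + 1) / 2) * t)) := by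
  obtain ⟨C, hC0, hC⟩ := W_bound hf
  have hδ : (0 : ℝ) < (1 + n) / 4 := by positivity
  obtain ⟨C1, hC1, h1⟩ := Pi_bound ha hδ
  obtain ⟨C2, hC2, h2⟩ := Pi_bound hc hδ
  have hfin := PP_finite ha hc
  have := Pi_finite ha
  have := Pi_finite hc
  refine ⟨C * (C1 * C2) + C * 4 ^ (a + c + 1) * (PP a c).real univ, by positivity,
    fun φ t θ hφ hθ ht => ?_⟩
  have hs1 : 0 < Real.sin (θ / 2) := Real.sin_pos_of_pos_of_lt_pi (by linarith [hθ.1])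
    (by linarith [hθ.2, hθ.1])
  have hs2 : 0 < Real.sin (φ / 2) := Real.sin_pos_of_pos_of_lt_pi (by linarith [hφ.1])
    (by linarith [hφ.2, hφ.1])
  have hc1 : 0 < Real.cos (θ / 2) := Real.cos_pos_of_mem_Ioo ⟨by linarith [hθ.1, Real.pi_pos],
    by linarith [hθ.2]⟩
  have hc2 : 0 < Real.cos (φ / 2) := Real.cos_pos_of_mem_Ioo ⟨by linarith [hφ.1, Real.pi_pos],
    by linarith [hφ.2]⟩
  set A := Real.sin (θ / 2) * Real.sin (φ / 2) with hA
  set B := Real.cos (θ / 2) * Real.cos (φ / 2) with hB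
  have hA0 : 0 < A := by positivity
  have hB0 : 0 < B := by positivity
  have hcos : Real.cos ((θ - φ) / 2) = B + A := by
    rw [sub_div, Real.cos_sub]
  have hXX : ∀ u v, XX φ θ u v = u * A + v * B := fun u v => by
    unfold XX; rw [hA, hB]; ring
  have hch := cosh_gt ht
  set D := Real.cosh (t / 2) - Real.cos ((θ - φ) / 2) with hD
  have hD0 : 0 < D := by have := Real.cos_le_one ((θ - φ) / 2); linarith
  constructor
  · intro hle
    set p1 := a + 1 / 2 + (1 + n) / 4 with hp1
    set p2 := c + 1 / 2 + (1 + n) / 4 with hp2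
    have hp10 : 0 ≤ p1 := by linarith
    have hp20 : 0 ≤ p2 := by linarith
    have hgInt : Integrable (fun z : ℝ × ℝ => C * ((D + (1 - z.1) * A) ^ (-p1) *
        (D + (1 - z.2) * B) ^ (-p2))) (PP a c) :=
      ((single_integrable ha hD0 hA0.le hp10).mul_prod
        (single_integrable hc hD0 hB0.le hp20)).const_mul C
    have hpt : ∀ᵐ z ∂(PP a c), ‖f φ t θ z.1 z.2‖ ≤ C * ((D + (1 - z.1) * A) ^ (-p1) *
        (D + (1 - z.2) * B) ^ (-p2)) := by
      filter_upwards [PP_support ha hc] with z hz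
      refine ((hC φ t θ z.1 z.2 ht hz.1 hz.2).1 hle).trans ?_
      refine mul_le_mul_of_nonneg_left ?_ hC0
      have hE := E_pos (φ := φ) (θ := θ) ht hz.1 hz.2
      have e : -(a + c + 2 - 1 / 2 + (n : ℝ) / 2) = -p1 + -p2 := by rw [hp1, hp2]; ring
      rw [e, Real.rpow_add hE]
      have hu : 0 ≤ (1 - z.1) * A := mul_nonneg (by linarith [hz.1.2]) hA0.le
      have hv : 0 ≤ (1 - z.2) * B := mul_nonneg (by linarith [hz.2.2]) hB0.le
      have hEE : Real.cosh (t / 2) - XX φ θ z.1 z.2 = D + (1 - z.1) * A + (1 - z.2) * B := by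
        rw [hXX, hD, hcos]; ring
      rw [hEE]
      refine mul_le_mul ?_ ?_ ?_ ?_
      · exact Real.rpow_le_rpow_of_nonpos (by linarith) (by linarith) (by linarith)
      · exact Real.rpow_le_rpow_of_nonpos (by linarith) (by linarith) (by linarith)
      · exact Real.rpow_nonneg (by linarith) _
      · exact Real.rpow_nonneg (by linarith) _
    have h3 := norm_integral_le_of_norm_le hgInt hpt
    rw [Real.norm_eq_abs] at h3
    refine h3.trans ?_
    have hprod : ∫ z : ℝ × ℝ, (D + (1 - z.1) * A) ^ (-p1) * (D + (1 - z.2) * B) ^ (-p2) ∂(PP a c) =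
        (∫ u, (D + (1 - u) * A) ^ (-p1) ∂(PiMeasure a)) *
          ∫ u, (D + (1 - u) * B) ^ (-p2) ∂(PiMeasure c) :=
      integral_prod_mul (fun u : ℝ => (D + (1 - u) * A) ^ (-p1))
        (fun u : ℝ => (D + (1 - u) * B) ^ (-p2))
    rw [integral_const_mul, hprod]
    have k1 := h1 D A hD0 hA0.le
    have k2 := h2 D B hD0 hB0.le
    have hDA : 0 < D + A := by linarith
    have hDB : 0 < D + B := by linarith
    have k2n : 0 ≤ ∫ u, (D + (1 - u) * B) ^ (-p2) ∂(PiMeasure c) := by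
      apply integral_nonneg_of_ae
      filter_upwards [Pi_support c] with v hv
      have : 0 ≤ (1 - v) * B := mul_nonneg (by linarith [hv.2]) hB0.le
      exact Real.rpow_nonneg (by linarith) _
    have eD : D ^ (-((1 + n) / 2 : ℝ)) = D ^ (-((1 + n) / 4 : ℝ)) * D ^ (-((1 + n) / 4 : ℝ)) := by
      rw [← Real.rpow_add hD0]; congr 1; ring
    calc _ ≤ C * ((C1 * D ^ (-((1 + n) / 4 : ℝ)) * (D + A) ^ (-(a + 1 / 2))) *
          (C2 * D ^ (-((1 + n) / 4 : ℝ)) * (D + B) ^ (-(c + 1 / 2)))) := by gcongr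
      _ = C * (C1 * C2) * D ^ (-((1 + n) / 2 : ℝ)) * (D + A) ^ (-(a + 1 / 2)) *
          (D + B) ^ (-(c + 1 / 2)) := by rw [eD]; ring
      _ ≤ _ := by
        gcongr
        have : 0 ≤ C * 4 ^ (a + c + 1) * (PP a c).real univ := by positivity
        linarith
  · intro hle
    have hpt : ∀ᵐ z ∂(PP a c), ‖f φ t θ z.1 z.2‖ ≤
        C * (4 ^ (a + c + 1) * Real.exp (-((a + c + 1) / 2) * t)) := by
      filter_upwards [PP_support ha hc] with z hz
      refine ((hC φ t θ z.1 z.2 ht hz.1 hz.2).2 hle).trans ?_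
      refine mul_le_mul_of_nonneg_left ?_ hC0
      have hX := (abs_le.1 (abs_XX_le (φ := φ) (θ := θ) hz.1 hz.2)).2
      have hexp : Real.exp (t / 2) / 4 ≤ Real.cosh (t / 2) - XX φ θ z.1 z.2 := by
        have h5 := Real.cosh_eq (t / 2)
        have := Real.exp_pos (-(t / 2))
        linarith
      calc _ ≤ (Real.exp (t / 2) / 4) ^ (1 - (a + c + 2)) :=
            Real.rpow_le_rpow_of_nonpos (by positivity) hexp (by linarith)
        _ = _ := by
            rw [show 1 - (a + c + 2) = -(a + c + 1) by ring, Real.div_rpow (by positivity)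
              (by norm_num), Real.rpow_neg (by norm_num : (0 : ℝ) ≤ 4), div_inv_eq_mul,
              ← Real.exp_mul, mul_comm]
            congr 2; ring
    have h3 := norm_integral_le_of_norm_le_const hpt
    rw [Real.norm_eq_abs] at h3
    refine h3.trans ?_
    have : 0 ≤ C * (C1 * C2) * Real.exp (-((a + c + 1) / 2) * t) := by positivity
    calc _ = C * 4 ^ (a + c + 1) * (PP a c).real univ * Real.exp (-((a + c + 1) / 2) * t) := by ring
      _ ≤ _ := by rw [add_mul]; linarith

lemma D_lower {θ φ t : ℝ} (hθ : θ ∈ Ioo 0 π) (hφ : φ ∈ Ioo 0 π) (ht : 0 < t) :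
    (t ^ 2 + (θ - φ) ^ 2) / 20 ≤ Real.cosh (t / 2) - Real.cos ((θ - φ) / 2) := by
  have hpi := Real.pi_lt_d2
  have h1 : t ^ 2 / 8 ≤ Real.cosh (t / 2) - 1 := by
    have e : Real.cosh (t / 2) = 1 + 2 * Real.sinh (t / 4) ^ 2 := by
      rw [show t / 2 = 2 * (t / 4) by ring, Real.cosh_two_mul, Real.cosh_sq]; ring
    have : t / 4 ≤ Real.sinh (t / 4) := Real.self_le_sinh_iff.2 (by linarith)
    have : (t / 4) ^ 2 ≤ Real.sinh (t / 4) ^ 2 := by gcongr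
    rw [e]; linarith
  have h2 : Real.cos ((θ - φ) / 2) ≤ 1 - 2 / π ^ 2 * ((θ - φ) / 2) ^ 2 := by
    apply Real.cos_le_one_sub_mul_cos_sq
    rw [abs_le]; constructor <;> linarith [hθ.1, hθ.2, hφ.1, hφ.2]
  have h3 : (1 : ℝ) / 10 ≤ 2 / π ^ 2 * (1 / 2) := by
    rw [div_mul_div_comm, div_le_div_iff₀ (by norm_num) (by positivity)]
    nlinarith [Real.pi_gt_three]
  nlinarith [sq_nonneg (θ - φ), sq_nonneg t]

lemma sin_prod_lower {x y : ℝ} (hx : x ∈ Ioo 0 π) (hy : y ∈ Ioo 0 π) :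
    x * y / 10 ≤ Real.sin (x / 2) * Real.sin (y / 2) := by
  have hpi := Real.pi_lt_d2
  have hp := Real.pi_pos
  have h1 : 2 / π * (x / 2) ≤ Real.sin (x / 2) :=
    Real.mul_le_sin (by linarith [hx.1]) (by linarith [hx.2])
  have h2 : 2 / π * (y / 2) ≤ Real.sin (y / 2) :=
    Real.mul_le_sin (by linarith [hy.1]) (by linarith [hy.2])
  have hx0 := hx.1
  have hy0 := hy.1
  calc x * y / 10 ≤ x * y / π ^ 2 := by
        have : π ^ 2 ≤ 10 := by nlinarith [Real.pi_gt_three]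
        gcongr
    _ = (2 / π * (x / 2)) * (2 / π * (y / 2)) := by field_simp
    _ ≤ _ := by gcongr; exact (by positivity : 0 ≤ 2 / π * (x / 2)).trans h1

lemma DA_lower {θ φ t : ℝ} (hθ : θ ∈ Ioo 0 π) (hφ : φ ∈ Ioo 0 π) (ht : 0 < t) :
    (θ + φ) ^ 2 / 40 ≤
      Real.cosh (t / 2) - Real.cos ((θ - φ) / 2) + Real.sin (θ / 2) * Real.sin (φ / 2) := by
  have h1 := D_lower hθ hφ ht
  have h2 := sin_prod_lower hθ hφ
  nlinarith [sq_nonneg (θ - φ), sq_nonneg t]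

lemma DB_lower {θ φ t : ℝ} (hθ : θ ∈ Ioo 0 π) (hφ : φ ∈ Ioo 0 π) (ht : 0 < t) :
    (2 * π - θ - φ) ^ 2 / 40 ≤
      Real.cosh (t / 2) - Real.cos ((θ - φ) / 2) + Real.cos (θ / 2) * Real.cos (φ / 2) := by
  have h := DA_lower (θ := π - θ) (φ := π - φ) (t := t) ⟨by linarith [hθ.2], by linarith [hθ.1]⟩
    ⟨by linarith [hφ.2], by linarith [hφ.1]⟩ ht
  have e1 : (π - θ) / 2 = π / 2 - θ / 2 := by ring
  have e2 : (π - φ) / 2 = π / 2 - φ / 2 := by ring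
  have e3 : (π - θ - (π - φ)) / 2 = -((θ - φ) / 2) := by ring
  rw [e3, e1, e2, Real.sin_pi_div_two_sub, Real.sin_pi_div_two_sub, Real.cos_neg] at h
  have e4 : π - θ + (π - φ) = 2 * π - θ - φ := by ring
  rwa [e4] at h


/-! ### Assembly -/

lemma sq_rpow_aux {E r x : ℝ} (hr : 0 < r) (hx : 0 ≤ x) (hE : r ^ 2 / 40 ≤ E) :
    E ^ (-x) ≤ 40 ^ x * r ^ (-(2 * x)) := by
  calc E ^ (-x) ≤ (r ^ 2 / 40) ^ (-x) :=
        Real.rpow_le_rpow_of_nonpos (by positivity) hE (by linarith)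
    _ = 40 ^ x * r ^ (-(2 * x)) := by
        rw [Real.div_rpow (by positivity) (by norm_num), Real.rpow_neg (by norm_num : (0 : ℝ) ≤ 40),
          div_inv_eq_mul, ← Real.rpow_natCast r 2, ← Real.rpow_mul hr.le, mul_comm]
        congr 2; push_cast; ring

lemma prod_aux {A B D r r' : ℝ} (hD : 0 < D) (hA : 0 ≤ A) (hB : 0 ≤ B)
    (hDA : r ^ 2 / 40 ≤ D + A) (hDB : r' ^ 2 / 40 ≤ D + B) (h : 3 ≤ r ∨ 3 ≤ r') :
    D / 5 ≤ (D + A) * (D + B) := by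
  rcases h with h | h
  · have h9 : 9 ≤ r ^ 2 := by nlinarith
    have h5 : 1 / 5 ≤ D + A := by linarith
    have := mul_le_mul h5 (show D ≤ D + B by linarith) hD.le (by linarith)
    linarith
  · have h9 : 9 ≤ r' ^ 2 := by nlinarith
    have h5 : 1 / 5 ≤ D + B := by linarith
    have := mul_le_mul (show D ≤ D + A by linarith) h5 (by norm_num) (by linarith)
    linarith

set_option maxHeartbeats 2000000 in
lemma final_pt {α β : ℝ} (hα : -(1 / 2) ≤ α) (hβ : -(1 / 2) ≤ β) (τ γ n L : ℕ)
    (hγ : γ ≤ 2 * τ) (hL : n + 2 * τ ≤ L + γ) {f : Fn}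
    (hf : f ∈ W ((α + τ) + (β + τ) + 2) n) :
    ∃ C : ℝ, 0 ≤ C ∧ ∀ φ t θ : ℝ, φ ∈ Ioo 0 π → θ ∈ Ioo 0 π → 0 < t →
      (II (α + τ) (β + τ) f φ t θ) ^ 2 ≤ C *
        ((θ + φ) ^ (-(2 * α + 1 + γ)) * (2 * π - θ - φ) ^ (-(2 * β + 1 + γ))) ^ 2 *
        (((t ^ 2 + (θ - φ) ^ 2) ^ (L + 1))⁻¹ + Real.exp (-((α + τ) + (β + τ) + 1) * t)) := by
  have hτ0 : (0 : ℝ) ≤ τ := by positivity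
  have hγ0 : (0 : ℝ) ≤ γ := by positivity
  have hγ' : (γ : ℝ) ≤ 2 * τ := by exact_mod_cast hγ
  have hL' : (n + 2 * τ : ℝ) ≤ L + γ := by exact_mod_cast hL
  obtain ⟨C, hC0, hC⟩ := II_bound (a := α + τ) (c := β + τ) (by linarith) (by linarith) hf
  set x := α + 1 / 2 + γ / 2 with hx
  set y := β + 1 / 2 + γ / 2 with hy
  set σ : ℝ := τ - γ / 2 with hσ
  have hx0 : 0 ≤ x := by linarith
  have hy0 : 0 ≤ y := by linarith
  have hσ0 : 0 ≤ σ := by linarith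
  set w : ℝ := (1 + L) / 2 - (1 + n) / 2 - σ with hw
  have hw0 : 0 ≤ w := by rw [hw, hσ]; linarith
  set C1 : ℝ := C * 40 ^ x * 40 ^ y * 5 ^ σ * 3 ^ w with hC1
  have hC10 : 0 ≤ C1 := by positivity
  set z0 : ℝ := (2 * π) ^ (-(2 * x)) * (2 * π) ^ (-(2 * y)) with hz0
  have hpi := Real.pi_pos
  have hz00 : 0 < z0 := by positivity
  refine ⟨C1 ^ 2 * 20 ^ (L + 1) + C ^ 2 / z0 ^ 2, by positivity, fun φ t θ hφ hθ ht => ?_⟩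
  have ex : -(2 * α + 1 + (γ : ℝ)) = -(2 * x) := by rw [hx]; ring
  have ey : -(2 * β + 1 + (γ : ℝ)) = -(2 * y) := by rw [hy]; ring
  rw [ex, ey]
  have hr : 0 < θ + φ := by linarith [hθ.1, hφ.1]
  have hr' : 0 < 2 * π - θ - φ := by linarith [hθ.2, hφ.2]
  set Z := (θ + φ) ^ (-(2 * x)) * (2 * π - θ - φ) ^ (-(2 * y)) with hZ
  have hZ0 : 0 < Z := by positivity
  have hZz : z0 ≤ Z := by
    refine mul_le_mul ?_ ?_ (by positivity) (by positivity)
    · exact Real.rpow_le_rpow_of_nonpos hr (by linarith [hθ.2, hφ.2]) (by linarith)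
    · exact Real.rpow_le_rpow_of_nonpos hr' (by linarith [hθ.1, hφ.1]) (by linarith)
  obtain ⟨h1, h2⟩ := hC φ t θ hφ hθ ht
  have hT : 0 < t ^ 2 + (θ - φ) ^ 2 := by positivity
  rcases le_total (Real.cosh (t / 2)) 2 with hch | hch
  · have h1 := h1 hch
    have hDl := D_lower hθ hφ ht
    have hDA := DA_lower hθ hφ ht
    have hDB := DB_lower hθ hφ ht
    have hA0 : 0 ≤ Real.sin (θ / 2) * Real.sin (φ / 2) := by
      have := sin_prod_lower hθ hφ
      have := mul_pos hθ.1 hφ.1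
      linarith
    have hB0 : 0 ≤ Real.cos (θ / 2) * Real.cos (φ / 2) := by
      apply mul_nonneg <;> apply Real.cos_nonneg_of_mem_Icc <;> constructor <;>
        linarith [hθ.1, hθ.2, hφ.1, hφ.2]
    have hcl := Real.neg_one_le_cos ((θ - φ) / 2)
    set A := Real.sin (θ / 2) * Real.sin (φ / 2)
    set B := Real.cos (θ / 2) * Real.cos (φ / 2)
    set D := Real.cosh (t / 2) - Real.cos ((θ - φ) / 2) with hD
    have hD0 : 0 < D := lt_of_lt_of_le (by positivity) hDl
    have hD3 : D ≤ 3 := by linarith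
    have hDA0 : 0 < D + A := by linarith
    have hDB0 : 0 < D + B := by linarith
    have hprod : D / 5 ≤ (D + A) * (D + B) := by
      have hp3 := Real.pi_gt_three
      refine prod_aux hD0 hA0 hB0 hDA hDB ?_
      rcases le_total π (θ + φ) with h | h
      · exact Or.inl (by linarith)
      · exact Or.inr (by linarith)
    have b1 : (D + A) ^ (-(α + τ + 1 / 2)) ≤ 40 ^ x * (θ + φ) ^ (-(2 * x)) * (D + A) ^ (-σ) := by
      have : -(α + τ + 1 / 2) = -x + -σ := by rw [hx, hσ]; ring
      rw [this, Real.rpow_add hDA0]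
      exact mul_le_mul_of_nonneg_right (sq_rpow_aux hr hx0 hDA) (by positivity)
    have b2 : (D + B) ^ (-(β + τ + 1 / 2)) ≤
        40 ^ y * (2 * π - θ - φ) ^ (-(2 * y)) * (D + B) ^ (-σ) := by
      have : -(β + τ + 1 / 2) = -y + -σ := by rw [hy, hσ]; ring
      rw [this, Real.rpow_add hDB0]
      exact mul_le_mul_of_nonneg_right (sq_rpow_aux hr' hy0 hDB) (by positivity)
    have b3 : (D + A) ^ (-σ) * (D + B) ^ (-σ) ≤ 5 ^ σ * D ^ (-σ) := by
      rw [← Real.mul_rpow hDA0.le hDB0.le]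
      calc _ ≤ (D / 5) ^ (-σ) :=
            Real.rpow_le_rpow_of_nonpos (by positivity) hprod (by linarith)
        _ = _ := by
            rw [Real.div_rpow hD0.le (by norm_num), Real.rpow_neg (by norm_num : (0 : ℝ) ≤ 5),
              div_inv_eq_mul, mul_comm]
    have b4 : D ^ (-((1 + n) / 2 : ℝ)) * D ^ (-σ) ≤ 3 ^ w * D ^ (-((1 + L) / 2 : ℝ)) := by
      have : -((1 + n) / 2 : ℝ) + -σ = w + -((1 + L) / 2 : ℝ) := by rw [hw]; ring
      rw [← Real.rpow_add hD0, this, Real.rpow_add hD0]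
      gcongr
    have b5 : |II (α + τ) (β + τ) f φ t θ| ≤ C1 * Z * D ^ (-((1 + L) / 2 : ℝ)) := by
      calc _ ≤ _ := h1
        _ ≤ C * D ^ (-((1 + n) / 2 : ℝ)) * (40 ^ x * (θ + φ) ^ (-(2 * x)) * (D + A) ^ (-σ)) *
            (40 ^ y * (2 * π - θ - φ) ^ (-(2 * y)) * (D + B) ^ (-σ)) := by gcongr
        _ = C * 40 ^ x * 40 ^ y * Z * (D ^ (-((1 + n) / 2 : ℝ)) *
            ((D + A) ^ (-σ) * (D + B) ^ (-σ))) := by rw [hZ]; ring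
        _ ≤ C * 40 ^ x * 40 ^ y * Z * (D ^ (-((1 + n) / 2 : ℝ)) * (5 ^ σ * D ^ (-σ))) := by gcongr
        _ = C * 40 ^ x * 40 ^ y * Z * 5 ^ σ * (D ^ (-((1 + n) / 2 : ℝ)) * D ^ (-σ)) := by ring
        _ ≤ C * 40 ^ x * 40 ^ y * Z * 5 ^ σ * (3 ^ w * D ^ (-((1 + L) / 2 : ℝ))) := by gcongr
        _ = _ := by rw [hC1]; ring
    have b6 : (D ^ (-((1 + L) / 2 : ℝ))) ^ 2 ≤ 20 ^ (L + 1) * ((t ^ 2 + (θ - φ) ^ 2) ^ (L + 1))⁻¹ := by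
      have : (D ^ (-((1 + L) / 2 : ℝ))) ^ 2 = (D ^ (L + 1))⁻¹ := by
        rw [← Real.rpow_natCast, ← Real.rpow_mul hD0.le, ← Real.rpow_natCast D, ← Real.rpow_neg hD0.le]
        congr 1; push_cast; ring
      rw [this]
      calc _ ≤ (((t ^ 2 + (θ - φ) ^ 2) / 20) ^ (L + 1))⁻¹ := by gcongr
        _ = _ := by rw [div_pow, inv_div, div_eq_mul_inv]
    calc _ = |II (α + τ) (β + τ) f φ t θ| ^ 2 := (sq_abs _).symm
      _ ≤ (C1 * Z * D ^ (-((1 + L) / 2 : ℝ))) ^ 2 := by gcongr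
      _ = C1 ^ 2 * Z ^ 2 * (D ^ (-((1 + L) / 2 : ℝ))) ^ 2 := by ring
      _ ≤ C1 ^ 2 * Z ^ 2 * (20 ^ (L + 1) * ((t ^ 2 + (θ - φ) ^ 2) ^ (L + 1))⁻¹) := by gcongr
      _ = (C1 ^ 2 * 20 ^ (L + 1)) * Z ^ 2 * ((t ^ 2 + (θ - φ) ^ 2) ^ (L + 1))⁻¹ := by ring
      _ ≤ _ := by
        gcongr
        · have : 0 ≤ C ^ 2 / z0 ^ 2 := by positivity
          linarith
        · have := Real.exp_pos (-((α + τ) + (β + τ) + 1) * t)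
          linarith
  · have h2 := h2 hch
    have e : Real.exp (-((α + τ + (β + τ) + 1) / 2) * t) ^ 2 =
        Real.exp (-((α + τ) + (β + τ) + 1) * t) := by
      rw [← Real.exp_nat_mul]; congr 1; push_cast; ring
    calc _ = |II (α + τ) (β + τ) f φ t θ| ^ 2 := (sq_abs _).symm
      _ ≤ (C * Real.exp (-((α + τ + (β + τ) + 1) / 2) * t)) ^ 2 := by gcongr
      _ = C ^ 2 / z0 ^ 2 * z0 ^ 2 * Real.exp (-((α + τ) + (β + τ) + 1) * t) := by
          rw [mul_pow, e]; field_simp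
      _ ≤ _ := by
        gcongr
        · have : 0 ≤ C1 ^ 2 * 20 ^ (L + 1) := by positivity
          linarith
        · have : 0 < ((t ^ 2 + (θ - φ) ^ 2) ^ (L + 1))⁻¹ := by positivity
          linarith

lemma t_integral {L : ℕ} (hL : 0 < L) {d : ℝ} (hd : 0 < d) :
    IntegrableOn (fun t : ℝ => ((t ^ 2 + d ^ 2) ^ (L + 1))⁻¹ * t ^ (2 * L - 1)) (Ioi 0) ∧
    ∫ t in Ioi (0 : ℝ), ((t ^ 2 + d ^ 2) ^ (L + 1))⁻¹ * t ^ (2 * L - 1) = 1 / (2 * L * d ^ 2) := by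
  have hL' : (0 : ℝ) < L := by exact_mod_cast hL
  have hder : ∀ t ∈ Ici (0 : ℝ), HasDerivAt
      (fun t : ℝ => (t ^ 2 / (t ^ 2 + d ^ 2)) ^ L * (1 / (2 * L * d ^ 2)))
      (((t ^ 2 + d ^ 2) ^ (L + 1))⁻¹ * t ^ (2 * L - 1)) t := by
    intro t ht
    have hpos : 0 < t ^ 2 + d ^ 2 := by positivity
    have h2 : HasDerivAt (fun t : ℝ => t ^ 2) (2 * t) t := by simpa using hasDerivAt_pow 2 t
    refine (((h2.div (h2.add_const (d ^ 2)) hpos.ne').pow L).mul_const _).congr_deriv ?_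
    obtain ⟨k, rfl⟩ : ∃ k, L = k + 1 := ⟨L - 1, by omega⟩
    have e1 : 2 * (k + 1) - 1 = 2 * k + 1 := by omega
    simp only [e1, Nat.add_sub_cancel, Pi.div_apply]
    rw [div_pow, ← pow_mul]
    have : ((k + 1 : ℕ) : ℝ) ≠ 0 := hL'.ne'
    field_simp
    ring
  have hlim : Filter.Tendsto (fun t : ℝ => (t ^ 2 / (t ^ 2 + d ^ 2)) ^ L * (1 / (2 * L * d ^ 2)))
      Filter.atTop (nhds (1 / (2 * L * d ^ 2))) := by
    have h1 : Filter.Tendsto (fun t : ℝ => t ^ 2 + d ^ 2) Filter.atTop Filter.atTop :=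
      Filter.tendsto_atTop_add_const_right _ _ (Filter.tendsto_pow_atTop (by norm_num))
    have h2 : Filter.Tendsto (fun t : ℝ => 1 - d ^ 2 / (t ^ 2 + d ^ 2)) Filter.atTop
        (nhds (1 - 0)) := (h1.const_div_atTop (d ^ 2)).const_sub 1
    have h3 : (fun t : ℝ => t ^ 2 / (t ^ 2 + d ^ 2)) = fun t => 1 - d ^ 2 / (t ^ 2 + d ^ 2) := by
      funext t
      have hpos : 0 < t ^ 2 + d ^ 2 := by positivity
      field_simp; ring
    rw [← h3, sub_zero] at h2
    simpa only [one_pow, one_mul] using (h2.pow L).mul_const (1 / (2 * L * d ^ 2))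
  have hn : ∀ t ∈ Ioi (0 : ℝ), 0 ≤ ((t ^ 2 + d ^ 2) ^ (L + 1))⁻¹ * t ^ (2 * L - 1) := by
    intro t ht
    have : 0 < t := ht
    positivity
  refine ⟨integrableOn_Ioi_deriv_of_nonneg' hder hn hlim, ?_⟩
  rw [integral_Ioi_of_hasDerivAt_of_nonneg' hder hn hlim]
  simp [hL.ne']

lemma exp_integrable {k : ℝ} (hk : 0 < k) (m : ℕ) :
    IntegrableOn (fun t : ℝ => Real.exp (-k * t) * t ^ m) (Ioi 0) := by
  have h := integrableOn_rpow_mul_exp_neg_mul_rpow (p := 1) (s := m) (b := k)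
    (by have : (0 : ℝ) ≤ m := by positivity
        linarith) one_pos hk
  refine h.congr_fun ?_ measurableSet_Ioi
  intro t _
  simp only [Real.rpow_one, Real.rpow_natCast]
  ring

lemma ball_measure {α β θ φ : ℝ} (hα : -(1 / 2) ≤ α) (hβ : -(1 / 2) ≤ β) (hθ : θ ∈ Ioo 0 π)
    (hφ : φ ∈ Ioo 0 π) (hne : θ ≠ φ) :
    0 < (jacobiMeasure α β (jacobiBall θ |θ - φ|)).toReal ∧
    (jacobiMeasure α β (jacobiBall θ |θ - φ|)).toReal ≤
      2 * |θ - φ| * ((θ + φ) ^ (2 * α + 1) * (2 * π - θ - φ) ^ (2 * β + 1)) := by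
  have hd : 0 < |θ - φ| := abs_pos.2 (sub_ne_zero.2 hne)
  set d := |θ - φ| with hdd
  have hr : 0 < θ + φ := by linarith [hθ.1, hφ.1]
  have hr' : 0 < 2 * π - θ - φ := by linarith [hθ.2, hφ.2]
  have hd1 : d ≤ θ + φ := abs_le.2 ⟨by linarith [hθ.1, hφ.1], by linarith [hθ.1, hφ.1]⟩
  have hd2 : d ≤ 2 * π - θ - φ := abs_le.2 ⟨by linarith [hθ.2, hφ.2], by linarith [hθ.2, hφ.2]⟩
  set c := (θ + φ) ^ (2 * α + 1) * (2 * π - θ - φ) ^ (2 * β + 1) with hc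
  have hc0 : 0 ≤ c := by positivity
  have hmeas : MeasurableSet (jacobiBall θ d) := measurableSet_Ioo.inter measurableSet_Ioo
  have hle : jacobiMeasure α β (jacobiBall θ d) ≤ ENNReal.ofReal c * ENNReal.ofReal (2 * d) := by
    unfold jacobiMeasure
    rw [withDensity_apply _ hmeas]
    calc _ ≤ ∫⁻ _ in jacobiBall θ d, ENNReal.ofReal c ∂(volume.restrict (Ioo 0 π)) := by
          apply setLIntegral_mono measurable_const
          intro x hx
          apply ENNReal.ofReal_le_ofReal
          have hx1 := hx.1.1
          have hx2 := hx.1.2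
          have hx3 := hx.2.1
          have hx4 := hx.2.2
          have s0 : 0 ≤ Real.sin (x / 2) :=
            Real.sin_nonneg_of_nonneg_of_le_pi (by linarith) (by linarith)
          have s1 : Real.sin (x / 2) ≤ θ + φ := by
            have := Real.sin_le (show 0 ≤ x / 2 by linarith)
            linarith [hφ.1]
          have c0 : 0 ≤ Real.cos (x / 2) :=
            Real.cos_nonneg_of_mem_Icc ⟨by linarith, by linarith⟩
          have c1 : Real.cos (x / 2) ≤ 2 * π - θ - φ := by
            rw [← Real.sin_pi_div_two_sub]
            have := Real.sin_le (show 0 ≤ π / 2 - x / 2 by linarith)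
            linarith [hφ.2]
          have p1 : 0 ≤ 2 * α + 1 := by linarith
          have p2 : 0 ≤ 2 * β + 1 := by linarith
          rw [hc]
          gcongr
      _ = ENNReal.ofReal c * (volume.restrict (Ioo 0 π)) (jacobiBall θ d) := by
          rw [setLIntegral_const]
      _ ≤ ENNReal.ofReal c * volume (Ioo (θ - d) (θ + d)) := by
          exact mul_le_mul' le_rfl
            ((Measure.restrict_apply_le _ _).trans (measure_mono inter_subset_left))
      _ = _ := by rw [Real.volume_Ioo]; congr 2; ring
  have hfin : jacobiMeasure α β (jacobiBall θ d) ≠ ⊤ :=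
    ne_top_of_le_ne_top (ENNReal.mul_ne_top ENNReal.ofReal_ne_top ENNReal.ofReal_ne_top) hle
  constructor
  · refine ENNReal.toReal_pos ?_ hfin
    unfold jacobiMeasure
    intro h0
    rw [withDensity_apply_eq_zero (by fun_prop)] at h0
    have hsub : jacobiBall θ d ⊆ {x | ENNReal.ofReal (Real.sin (x / 2) ^ (2 * α + 1) *
        Real.cos (x / 2) ^ (2 * β + 1)) ≠ 0} ∩ jacobiBall θ d := by
      intro x hx
      refine ⟨?_, hx⟩
      have s0 : 0 < Real.sin (x / 2) :=
        Real.sin_pos_of_pos_of_lt_pi (by linarith [hx.2.1]) (by linarith [hx.2.1, hx.2.2])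
      have c0 : 0 < Real.cos (x / 2) :=
        Real.cos_pos_of_mem_Ioo ⟨by linarith [hx.2.1, Real.pi_pos], by linarith [hx.2.2]⟩
      have : 0 < Real.sin (x / 2) ^ (2 * α + 1) * Real.cos (x / 2) ^ (2 * β + 1) := by positivity
      exact (ENNReal.ofReal_pos.2 this).ne'
    have h1 := measure_mono_null hsub h0
    rw [Measure.restrict_apply hmeas] at h1
    have hopen : IsOpen (jacobiBall θ d ∩ Ioo 0 π) :=
      (isOpen_Ioo.inter isOpen_Ioo).inter isOpen_Ioo
    exact (hopen.measure_pos volume ⟨θ, ⟨⟨by linarith, by linarith⟩, hθ⟩, hθ⟩).ne' h1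
  · have := ENNReal.toReal_mono (ENNReal.mul_ne_top ENNReal.ofReal_ne_top ENNReal.ofReal_ne_top) hle
    rw [ENNReal.toReal_mul, ENNReal.toReal_ofReal hc0, ENNReal.toReal_ofReal (by positivity)] at this
    linarith


lemma main_int {L m : ℕ} (hL : 0 < L) (hm : m = 2 * L - 1) {k : ℝ} (hk : 0 < k) :
    ∃ J : ℝ, 0 ≤ J ∧ ∀ (F : ℝ → ℝ) (X d : ℝ), 0 ≤ X → 0 < d → d ≤ π →
      (∀ t, 0 < t → (F t) ^ 2 ≤ X * (((t ^ 2 + d ^ 2) ^ (L + 1))⁻¹ + Real.exp (-k * t))) →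
      ∫ t in Ioi (0 : ℝ), (F t) ^ 2 * t ^ m ≤ X * (J / d ^ 2) := by
  subst hm
  have hL' : (0 : ℝ) < L := by exact_mod_cast hL
  set J0 := ∫ t in Ioi (0 : ℝ), Real.exp (-k * t) * t ^ (2 * L - 1) with hJ0
  have hJ : 0 ≤ J0 := by
    refine setIntegral_nonneg measurableSet_Ioi fun t ht => ?_
    have : 0 < t := ht
    positivity
  refine ⟨1 / (2 * L) + J0 * π ^ 2, by positivity, fun F X d hX hd hdp hF => ?_⟩
  obtain ⟨i1, i2⟩ := t_integral hL hd
  have i3 := exp_integrable hk (2 * L - 1)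
  calc _ ≤ ∫ t in Ioi (0 : ℝ), X * (((t ^ 2 + d ^ 2) ^ (L + 1))⁻¹ * t ^ (2 * L - 1) +
        Real.exp (-k * t) * t ^ (2 * L - 1)) := by
        refine integral_mono_of_nonneg ?_ ((i1.add i3).const_mul X) ?_
        · filter_upwards [ae_restrict_mem measurableSet_Ioi] with t ht
          have : 0 < t := ht
          simp only [Pi.zero_apply]
          positivity
        · filter_upwards [ae_restrict_mem measurableSet_Ioi] with t ht
          have ht' : 0 < t := ht
          have := mul_le_mul_of_nonneg_right (hF t ht') (by positivity : 0 ≤ t ^ (2 * L - 1))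
          calc _ ≤ _ := this
            _ = _ := by ring
    _ = X * (1 / (2 * L * d ^ 2) + J0) := by
        rw [integral_const_mul, integral_add i1 i3, i2]
    _ ≤ _ := by
        refine mul_le_mul_of_nonneg_left ?_ hX
        have h1 : J0 ≤ J0 * π ^ 2 / d ^ 2 := by
          rw [le_div_iff₀ (by positivity)]
          gcongr
        have h2 : (1 / (2 * (L : ℝ)) + J0 * π ^ 2) / d ^ 2 =
            1 / (2 * L * d ^ 2) + J0 * π ^ 2 / d ^ 2 := by
          field_simp
        rw [h2]
        linarith

lemma main_aux (α β : ℝ)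
    (hα : -(1 / 2) ≤ α) (hβ : -(1 / 2) ≤ β) (hαβ : -1 < α + β)
    (L m K ε₁ τ γ : ℕ) (hL : 0 < L) (hm : m = 2 * L - 1) (hγ : γ ≤ 2 * τ)
    (hcond : K + ε₁ + 2 * τ ≤ L + γ) :
    ∃ C : ℝ, 0 < C ∧
      ∀ θ ∈ Ioo (0 : ℝ) π, ∀ φ ∈ Ioo (0 : ℝ) π, θ ≠ φ →
        Real.sqrt (∫ t in Ioi (0 : ℝ),
            (iteratedDeriv ε₁
                (fun θ' => iteratedDeriv K
                  (fun t' => Hker (α + τ) (β + τ) t' θ' φ) t) θ) ^ 2 *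
              t ^ m)
          ≤ C * (θ + φ) ^ (-(γ : ℝ)) * (2 * π - θ - φ) ^ (-(γ : ℝ)) /
              (jacobiMeasure α β (jacobiBall θ |θ - φ|)).toReal := by
  have hτ0 : (0 : ℝ) ≤ τ := by positivity
  obtain ⟨g, hg, hgi⟩ := iter_all (a := α + τ) (c := β + τ) (by linarith) (by linarith) K ε₁
  obtain ⟨C, hC0, hC⟩ := final_pt hα hβ τ γ (K + ε₁) L hγ hcond hg
  obtain ⟨J, hJ0, hJ⟩ := main_int hL hm (k := (α + τ) + (β + τ) + 1) (by linarith)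
  set c0 : ℝ := (2 : ℝ) ^ (-((α + τ) + (β + τ) + 2)) /
    (jacobiMeasure (α + τ) (β + τ) (Ioo 0 π)).toReal with hc0
  refine ⟨2 * Real.sqrt (c0 ^ 2 * C * J) + 1, by positivity, fun θ hθ φ hφ hne => ?_⟩
  obtain ⟨hm0, hm1⟩ := ball_measure hα hβ hθ hφ hne
  have hd : 0 < |θ - φ| := abs_pos.2 (sub_ne_zero.2 hne)
  have hdp : |θ - φ| ≤ π := abs_le.2 ⟨by linarith [hθ.1, hφ.2], by linarith [hθ.2, hφ.1]⟩
  have hsq : (θ - φ) ^ 2 = |θ - φ| ^ 2 := (sq_abs _).symm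
  set μB := (jacobiMeasure α β (jacobiBall θ |θ - φ|)).toReal
  set d := |θ - φ|
  have hr : 0 < θ + φ := by linarith [hθ.1, hφ.1]
  have hr' : 0 < 2 * π - θ - φ := by linarith [hθ.2, hφ.2]
  set Z := (θ + φ) ^ (-(2 * α + 1 + (γ : ℝ))) * (2 * π - θ - φ) ^ (-(2 * β + 1 + (γ : ℝ))) with hZ
  have hZ0 : 0 < Z := by positivity
  have key := hJ (fun t => iteratedDeriv ε₁ (fun θ' => iteratedDeriv K
    (fun t' => Hker (α + τ) (β + τ) t' θ' φ) t) θ) (c0 ^ 2 * C * Z ^ 2) d (by positivity) hd hdp (by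
      intro t ht
      have := hC φ t θ hφ hθ ht
      rw [hsq] at this
      simp only [hgi φ t θ ht]
      rw [mul_pow]
      calc _ ≤ _ := mul_le_mul_of_nonneg_left this (sq_nonneg c0)
        _ = _ := by ring)
  have e1 : c0 ^ 2 * C * Z ^ 2 * (J / d ^ 2) = (c0 ^ 2 * C * J) * (Z / d) ^ 2 := by
    field_simp
  have h1 := Real.sqrt_le_sqrt key
  rw [e1, Real.sqrt_mul (by positivity), Real.sqrt_sq (by positivity)] at h1
  set G := (θ + φ) ^ (-(γ : ℝ)) * (2 * π - θ - φ) ^ (-(γ : ℝ)) with hG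
  have hG0 : 0 < G := by positivity
  set c := (θ + φ) ^ (2 * α + 1) * (2 * π - θ - φ) ^ (2 * β + 1) with hc
  have hcp : 0 < c := by positivity
  have hZc : Z = G / c := by
    have q : ∀ r p : ℝ, 0 < r → r ^ (-(p + (γ : ℝ))) * r ^ p = r ^ (-(γ : ℝ)) := by
      intro r p h
      rw [← Real.rpow_add h]
      congr 1
      ring
    rw [eq_div_iff hcp.ne', hZ, hG, hc, ← q _ (2 * α + 1) hr, ← q _ (2 * β + 1) hr']
    ring
  have h2 : Z / d ≤ 2 * (G / μB) := by
    rw [hZc, div_div, ← mul_div_assoc, div_le_div_iff₀ (by positivity) hm0]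
    calc G * μB ≤ G * (2 * d * c) := by gcongr
      _ = _ := by ring
  calc _ ≤ _ := h1
    _ ≤ Real.sqrt (c0 ^ 2 * C * J) * (2 * (G / μB)) := by gcongr
    _ ≤ (2 * Real.sqrt (c0 ^ 2 * C * J) + 1) * (G / μB) := by
        have : 0 < G / μB := by positivity
        linarith
    _ = _ := by rw [hG]; ring


end

end JK

/-- Lemma 4.8* (a). -/
theorem square_function_kernel_growth (α β : ℝ)
    (hα : -(1 / 2) ≤ α) (hβ : -(1 / 2) ≤ β) (hαβ : -1 < α + β)
    (M N K ε₁ τ γ : ℕ) (hMN : 0 < M + N)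
    (hε₁ : ε₁ ≤ 2) (hτ : τ ≤ 1) (hγ : γ = τ ∨ γ = 2 * τ)
    (hcond : (ε₁ : ℤ) + (K : ℤ) + 2 * (τ : ℤ) - (γ : ℤ) ≤ (M : ℤ) + (N : ℤ)) :
    ∃ C : ℝ, 0 < C ∧
      ∀ θ ∈ Ioo (0 : ℝ) π, ∀ φ ∈ Ioo (0 : ℝ) π, θ ≠ φ →
        Real.sqrt (∫ t in Ioi (0 : ℝ),
            (iteratedDeriv ε₁
                (fun θ' => iteratedDeriv K
                  (fun t' => Hker (α + τ) (β + τ) t' θ' φ) t) θ) ^ 2 *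
              t ^ (2 * M + 2 * N - 1))
          ≤ C * (θ + φ) ^ (-(γ : ℝ)) * (2 * π - θ - φ) ^ (-(γ : ℝ)) /
              (jacobiMeasure α β (jacobiBall θ |θ - φ|)).toReal := by
  refine JK.main_aux α β hα hβ hαβ (M + N) (2 * M + 2 * N - 1) K ε₁ τ γ hMN (by omega) ?_ ?_
  · rcases hγ with h | h <;> omega
  · omega
end

section
/- Let α, β ≥ -1/2. There exists a constant C depending only on α and β such that for all t > 0 and all θ, ψ ∈ (0,π) with θ ≠ ψ: e^{t(α+β+1)/2} H_t^{α,β}(θ,ψ) ≤ C / μ_{α,β}^+(B(θ, |θ-ψ|)), and e^{t(α+β+1)/2} |∂_θ H_t^{α,β}(θ,ψ)| ≤ C / ( |θ-ψ| · μ_{α,β}^+(B(θ, |θ-ψ|)) ). -/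
open MeasureTheory Real Set

lemma aux_ftc (a b : ℝ) (hab : a ≤ b) (G g f : ℝ → ℝ) (hG : ContinuousOn G (Icc a b))
    (hd : ∀ x ∈ Ioo a b, HasDerivAt G (g x) x) (hf : ∀ x ∈ Ioo a b, f x ≤ g x)
    (hg : ∀ x ∈ Ioo a b, 0 ≤ g x) :
    ∫⁻ x in Icc a b, ENNReal.ofReal (f x) ≤ ENNReal.ofReal (G b - G a) := by
  have hi : IntegrableOn g (Ioc a b) := by
    apply intervalIntegral.integrableOn_deriv_of_nonneg hG hd hg
  have hii : IntervalIntegrable g volume a b := by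
    rwa [intervalIntegrable_iff_integrableOn_Ioc_of_le hab]
  have heq : ∫ x in a..b, g x = G b - G a :=
    intervalIntegral.integral_eq_sub_of_hasDerivAt_of_le hab hG hd hii
  rw [setLIntegral_congr Ioo_ae_eq_Icc.symm]
  have hi' : IntegrableOn g (Ioo a b) := hi.mono_set Ioo_subset_Ioc_self
  calc ∫⁻ x in Ioo a b, ENNReal.ofReal (f x) ≤ ∫⁻ x in Ioo a b, ENNReal.ofReal (g x) := by
        apply setLIntegral_mono' measurableSet_Ioo
        intro x hx
        exact ENNReal.ofReal_le_ofReal (hf x hx)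
    _ = ENNReal.ofReal (∫ x in Ioo a b, g x) := by
        rw [ofReal_integral_eq_lintegral_ofReal hi']
        filter_upwards [ae_restrict_mem measurableSet_Ioo] with x hx using hg x hx
    _ = _ := by
        rw [← integral_Ioc_eq_integral_Ioo, ← intervalIntegral.integral_of_le hab, heq]

/-- auxiliary primitive -/
noncomputable def Faux (b ε δ S w : ℝ) : ℝ :=
  w ^ b * ((δ + w * S) ^ (-b) * (2 * δ ^ (-ε) - (δ + w * S) ^ (-ε)))

/-- its derivative -/
noncomputable def Faux' (b ε δ S w : ℝ) : ℝ :=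
  w ^ (b - 1) * (δ + w * S) ^ (-b) / (δ + w * S) *
    (b * δ * (2 * δ ^ (-ε) - (δ + w * S) ^ (-ε)) + ε * (w * S) * (δ + w * S) ^ (-ε))

lemma Faux_hasDerivAt (b ε δ S w : ℝ) (hδ : 0 < δ) (hS : 0 ≤ S)
    (hw : 0 < w) : HasDerivAt (Faux b ε δ S) (Faux' b ε δ S w) w := by
  have hD : 0 < δ + w * S := by positivity
  have h0 : HasDerivAt (fun w => δ + w * S) S w := by
    simpa using ((hasDerivAt_id w).mul_const S).const_add δ
  have h1 := h0.rpow_const (p := -b) (Or.inl hD.ne')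
  have h2 := h0.rpow_const (p := -ε) (Or.inl hD.ne')
  have h3 := Real.hasDerivAt_rpow_const (x := w) (p := b) (Or.inl hw.ne')
  have h4 := h3.mul (h1.mul (h2.const_sub (2 * δ ^ (-ε))))
  refine h4.congr_deriv ?_
  unfold Faux'
  simp only [Pi.mul_apply]
  rw [Real.rpow_sub_one hD.ne', Real.rpow_sub_one hD.ne', Real.rpow_sub_one hw.ne']
  field_simp
  ring

lemma Faux'_ge (b ε δ S w : ℝ) (hb : 0 < b) (hε : 0 < ε) (hδ : 0 < δ) (hS : 0 ≤ S)
    (hw : 0 < w) : min b ε * (w ^ (b - 1) * (δ + w * S) ^ (-(b + ε))) ≤ Faux' b ε δ S w := by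
  have hwS : 0 ≤ w * S := by positivity
  have hD : 0 < δ + w * S := by positivity
  have hle : (δ + w * S) ^ (-ε) ≤ δ ^ (-ε) :=
    Real.rpow_le_rpow_of_nonpos hδ (by linarith) (by linarith)
  unfold Faux'
  have e1 : (δ + w * S) ^ (-(b + ε)) = (δ + w * S) ^ (-b) / (δ + w * S) *
      ((δ + w * S) * (δ + w * S) ^ (-ε)) := by
    rw [neg_add, Real.rpow_add hD]
    field_simp
  rw [e1]
  have hP : 0 ≤ w ^ (b - 1) * (δ + w * S) ^ (-b) / (δ + w * S) := by positivity
  have key : min b ε * ((δ + w * S) * (δ + w * S) ^ (-ε)) ≤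
      (b * δ * (2 * δ ^ (-ε) - (δ + w * S) ^ (-ε)) + ε * (w * S) * (δ + w * S) ^ (-ε)) := by
    set X := (δ + w * S) ^ (-ε)
    have hX : 0 < X := Real.rpow_pos_of_pos hD _
    have i1 : min b ε * (δ * X) ≤ b * (δ * X) := by gcongr; exact min_le_left _ _
    have i2 : min b ε * (w * S * X) ≤ ε * (w * S * X) := by gcongr; exact min_le_right _ _
    have i3 : b * δ * X ≤ b * δ * (2 * δ ^ (-ε) - X) := by gcongr; linarith
    nlinarith
  calc _ = w ^ (b - 1) * (δ + w * S) ^ (-b) / (δ + w * S) *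
      (min b ε * ((δ + w * S) * (δ + w * S) ^ (-ε))) := by ring
    _ ≤ _ := by gcongr

lemma Faux_cont (b ε δ S : ℝ) (hb : 0 < b) (hδ : 0 < δ) (hS : 0 ≤ S) :
    ContinuousOn (Faux b ε δ S) (Ici 0) := by
  have hD : ∀ w ∈ Ici (0:ℝ), δ + w * S ≠ 0 := by
    intro w hw
    have : 0 ≤ w := hw
    positivity
  unfold Faux
  have hc : ContinuousOn (fun w : ℝ => δ + w * S) (Ici 0) := by fun_prop
  refine ContinuousOn.mul ?_ (ContinuousOn.mul ?_ (ContinuousOn.sub continuousOn_const ?_))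
  · exact (Real.continuous_rpow_const hb.le).continuousOn
  · exact hc.rpow_const fun x hx => Or.inl (hD x hx)
  · exact hc.rpow_const fun x hx => Or.inl (hD x hx)

lemma weight_le (b u : ℝ) (hb : 0 < b) (hu : u ∈ Ioo (-1:ℝ) 1) :
    (0 ≤ u → (1 - u ^ 2) ^ (b - 1) ≤ 2 ^ b * (1 - u) ^ (b - 1)) ∧
    (u ≤ 0 → (1 - u ^ 2) ^ (b - 1) ≤ 2 ^ b * (1 + u) ^ (b - 1)) := by
  obtain ⟨h1, h2⟩ := hu
  have e : (1 - u ^ 2) ^ (b - 1) = (1 - u) ^ (b - 1) * (1 + u) ^ (b - 1) := by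
    rw [← Real.mul_rpow (by linarith) (by linarith)]; congr 1; ring
  have key : ∀ x : ℝ, 1 ≤ x → x ≤ 2 → x ^ (b - 1) ≤ 2 ^ b := by
    intro x hx hx2
    calc x ^ (b - 1) ≤ x ^ b := Real.rpow_le_rpow_of_exponent_le hx (by linarith)
      _ ≤ 2 ^ b := Real.rpow_le_rpow (by linarith) hx2 hb.le
  rw [e]
  constructor
  · intro h
    rw [mul_comm]
    have : 0 ≤ (1 - u) ^ (b - 1) := Real.rpow_nonneg (by linarith) _
    gcongr
    exact key _ (by linarith) (by linarith)
  · intro h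
    have : 0 ≤ (1 + u) ^ (b - 1) := Real.rpow_nonneg (by linarith) _
    gcongr
    exact key _ (by linarith) (by linarith)

/-- one-dimensional estimate, absolutely continuous case -/
lemma oneD_ac (b ε : ℝ) (hb : 0 < b) (hε : 0 < ε) : ∃ C : ℝ, 0 < C ∧ ∀ δ S : ℝ, 0 < δ → 0 ≤ S →
    ∫⁻ u in Icc (-1:ℝ) 1, ENNReal.ofReal ((1 - u ^ 2) ^ (b - 1) * (δ + (1 - u) * S) ^ (-(b + ε)))
      ≤ ENNReal.ofReal (C * (δ ^ (-ε) * (δ + S) ^ (-b))) := by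
  have hm : 0 < min b ε := lt_min hb hε
  refine ⟨2 ^ b * ((min b ε)⁻¹ * (2 ^ b * 2) + 2 ^ b / b), by positivity, ?_⟩
  intro δ S hδ hS
  have hDS : 0 < δ + S := by positivity
  set K := δ ^ (-ε) * (δ + S) ^ (-b) with hK
  have hKpos : 0 < K := by positivity
  set G : ℝ → ℝ := fun u => 2 ^ b * ((min b ε)⁻¹ * (-Faux b ε δ S (1 - u)) + K * ((1 + u) ^ b / b))
    with hGdef
  set g : ℝ → ℝ := fun u => 2 ^ b * ((min b ε)⁻¹ * Faux' b ε δ S (1 - u) + K * (1 + u) ^ (b - 1))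
    with hgdef
  have hF' : ∀ u ∈ Ioo (-1:ℝ) 1, (1 - u) ^ (b - 1) * (δ + (1 - u) * S) ^ (-(b + ε)) ≤
      (min b ε)⁻¹ * Faux' b ε δ S (1 - u) := by
    intro u hu
    have := Faux'_ge b ε δ S (1 - u) hb hε hδ hS (by linarith [hu.2])
    rw [le_inv_mul_iff₀ hm]
    exact this
  have hnn : ∀ u ∈ Ioo (-1:ℝ) 1, 0 ≤ (1 - u) ^ (b - 1) * (δ + (1 - u) * S) ^ (-(b + ε)) := by
    intro u hu
    have h1 : 0 ≤ 1 - u := by linarith [hu.2]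
    positivity
  have hnn2 : ∀ u ∈ Ioo (-1:ℝ) 1, 0 ≤ (1 + u) ^ (b - 1) := by
    intro u hu
    have h1 : 0 ≤ 1 + u := by linarith [hu.1]
    positivity
  refine (aux_ftc (-1) 1 (by norm_num) G g _ ?_ ?_ ?_ ?_).trans ?_
  · have c1 : ContinuousOn (fun u : ℝ => Faux b ε δ S (1 - u)) (Icc (-1) 1) := by
      refine (Faux_cont b ε δ S hb hδ hS).comp (by fun_prop) ?_
      intro u hu
      simp only [mem_Ici]; linarith [hu.2]
    have c2 : Continuous (fun u : ℝ => (1 + u) ^ b) :=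
      (continuous_const.add continuous_id).rpow_const (fun _ => Or.inr hb.le)
    exact continuousOn_const.mul ((continuousOn_const.mul c1.neg).add
      (continuousOn_const.mul (c2.continuousOn.div_const b)))
  · intro u hu
    have d1 := (Faux_hasDerivAt b ε δ S (1 - u) hδ hS (by linarith [hu.2])).comp_const_sub 1 u
    have d2 : HasDerivAt (fun u : ℝ => (1 + u) ^ b) (1 * b * (1 + u) ^ (b - 1)) u :=
      ((hasDerivAt_id u).const_add 1).rpow_const (Or.inl (by simp only [id]; linarith [hu.1]))
    have := (((d1.neg).const_mul (min b ε)⁻¹).add ((d2.div_const b).const_mul K)).const_mul (2 ^ b)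
    refine this.congr_deriv ?_
    simp only [hgdef]
    field_simp
  · intro u hu
    simp only [hgdef]
    have hw := weight_le b u hb hu
    have h2b : (0:ℝ) < 2 ^ b := by positivity
    have hDp : 0 < δ + (1 - u) * S := by
      have : 0 ≤ (1 - u) * S := mul_nonneg (by linarith [hu.2]) hS
      linarith
    rcases le_total 0 u with h | h
    · have := hw.1 h
      calc _ ≤ 2 ^ b * (1 - u) ^ (b - 1) * (δ + (1 - u) * S) ^ (-(b + ε)) := by gcongr
        _ = 2 ^ b * ((1 - u) ^ (b - 1) * (δ + (1 - u) * S) ^ (-(b + ε))) := by ring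
        _ ≤ _ := by
          gcongr
          have := hF' u hu
          have := mul_nonneg hKpos.le (hnn2 u hu)
          linarith
    · have := hw.2 h
      have hle : (δ + (1 - u) * S) ^ (-(b + ε)) ≤ K := by
        have i0 : (δ + (1 - u) * S) ^ (-(b + ε)) ≤ (δ + S) ^ (-(b + ε)) := by
          apply Real.rpow_le_rpow_of_nonpos hDS _ (by linarith)
          nlinarith
        have i1 : (δ + S) ^ (-ε) ≤ δ ^ (-ε) :=
          Real.rpow_le_rpow_of_nonpos hδ (by linarith) (by linarith)
        refine i0.trans ?_
        rw [neg_add, Real.rpow_add hDS, hK, mul_comm]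
        gcongr
      have := hnn2 u hu
      calc _ ≤ 2 ^ b * (1 + u) ^ (b - 1) * K := by gcongr
        _ = 2 ^ b * (K * (1 + u) ^ (b - 1)) := by ring
        _ ≤ _ := by
          gcongr
          have := hF' u hu
          have := hnn u hu
          linarith
  · intro u hu
    simp only [hgdef]
    have := hF' u hu
    have := hnn u hu
    have := hnn2 u hu
    have : 0 ≤ (min b ε)⁻¹ * Faux' b ε δ S (1 - u) := by linarith
    positivity
  · apply ENNReal.ofReal_le_ofReal
    have f2 : Faux b ε δ S 2 ≤ 2 ^ b * (2 * K) := by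
      unfold Faux
      have hD2 : 0 < δ + 2 * S := by positivity
      have j1 : (δ + 2 * S) ^ (-b) ≤ (δ + S) ^ (-b) :=
        Real.rpow_le_rpow_of_nonpos hDS (by linarith) (by linarith)
      have j2 : 2 * δ ^ (-ε) - (δ + 2 * S) ^ (-ε) ≤ 2 * δ ^ (-ε) := by
        have : 0 < (δ + 2 * S) ^ (-ε) := by positivity
        linarith
      calc _ ≤ 2 ^ b * ((δ + 2 * S) ^ (-b) * (2 * δ ^ (-ε))) := by gcongr
        _ ≤ 2 ^ b * ((δ + S) ^ (-b) * (2 * δ ^ (-ε))) := by gcongr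
        _ = _ := by rw [hK]; ring
    have f0 : Faux b ε δ S 0 = 0 := by
      unfold Faux
      rw [Real.zero_rpow hb.ne', zero_mul]
    simp only [hGdef]
    norm_num
    rw [f0, Real.zero_rpow hb.ne']
    have : (2:ℝ)^b * ((min b ε)⁻¹ * Faux b ε δ S 2) ≤ 2 ^ b * ((min b ε)⁻¹ * (2 ^ b * (2 * K))) := by
      gcongr
    norm_num
    nlinarith

lemma Pi_oneD (a ε : ℝ) (ha : -(1 / 2) ≤ a) (hε : 0 < ε) : ∃ C : ℝ, 0 < C ∧
    ∀ δ S : ℝ, 0 < δ → 0 ≤ S →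
    ∫⁻ u, ENNReal.ofReal ((δ + (1 - u) * S) ^ (-(a + 1 / 2 + ε))) ∂(PiMeasure a)
      ≤ ENNReal.ofReal (C * (δ ^ (-ε) * (δ + S) ^ (-(a + 1 / 2)))) := by
  by_cases h : a = -(1 / 2)
  · refine ⟨1, one_pos, ?_⟩
    intro δ S hδ hS
    have e : a + 1 / 2 = 0 := by rw [h]; norm_num
    rw [e]
    simp only [PiMeasure, h, if_true, lintegral_smul_measure, lintegral_add_measure,
      lintegral_dirac, smul_eq_mul]
    have i1 : (δ + (1 - -1) * S) ^ (-(0 + ε)) ≤ δ ^ (-ε) := by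
      rw [zero_add]
      exact Real.rpow_le_rpow_of_nonpos hδ (by linarith) (by linarith)
    have i2 : (δ + (1 - 1) * S) ^ (-(0 + ε)) ≤ δ ^ (-ε) := by
      rw [zero_add, sub_self, zero_mul, add_zero]
    have e2 : 1 * (δ ^ (-ε) * (δ + S) ^ (-(0:ℝ))) = δ ^ (-ε) := by simp
    rw [e2]
    calc _ ≤ (2:ENNReal)⁻¹ * (ENNReal.ofReal (δ ^ (-ε)) + ENNReal.ofReal (δ ^ (-ε))) := by
          gcongr
      _ = _ := by
          rw [← two_mul, ← mul_assoc, ENNReal.inv_mul_cancel (by simp) (by simp), one_mul]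
  · have hb : 0 < a + 1 / 2 := by
      rcases lt_or_eq_of_le ha with h1 | h1
      · linarith
      · exact absurd h1.symm h
    obtain ⟨C, hC, hCb⟩ := oneD_ac (a + 1 / 2) ε hb hε
    set c := Real.Gamma (a + 1) / (Real.sqrt π * Real.Gamma (a + 1 / 2)) with hc
    have hcpos : 0 < c := by
      have := Real.Gamma_pos_of_pos hb
      have := Real.Gamma_pos_of_pos (show 0 < a + 1 by linarith)
      have := Real.pi_pos
      positivity
    refine ⟨c * C, by positivity, ?_⟩
    intro δ S hδ hS
    simp only [PiMeasure, h, if_false]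
    rw [← hc]
    rw [lintegral_withDensity_eq_lintegral_mul _ (by fun_prop) (by fun_prop)]
    have h1 := hCb δ S hδ hS
    calc _ = ∫⁻ u in Icc (-1:ℝ) 1, ENNReal.ofReal c * ENNReal.ofReal
          ((1 - u ^ 2) ^ (a + 1 / 2 - 1) * (δ + (1 - u) * S) ^ (-(a + 1 / 2 + ε))) := by
          apply setLIntegral_congr_fun measurableSet_Icc
          intro u hu
          have h0 : 0 ≤ 1 - u ^ 2 := by nlinarith [hu.1, hu.2]
          have h00 : a + 1 / 2 - 1 = a - 1 / 2 := by ring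
          simp only [Pi.mul_apply]
          rw [← ENNReal.ofReal_mul (by positivity), ← ENNReal.ofReal_mul (by positivity), h00]
          congr 1
          ring
      _ = ENNReal.ofReal c * ∫⁻ u in Icc (-1:ℝ) 1, ENNReal.ofReal
          ((1 - u ^ 2) ^ (a + 1 / 2 - 1) * (δ + (1 - u) * S) ^ (-(a + 1 / 2 + ε))) := by
          rw [lintegral_const_mul' _ _ ENNReal.ofReal_ne_top]
      _ ≤ _ := by
          rw [mul_assoc, ENNReal.ofReal_mul hcpos.le]
          gcongr

lemma Pi_finite (a : ℝ) (ha : -(1 / 2) ≤ a) : IsFiniteMeasure (PiMeasure a) := by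
  obtain ⟨C, hC, h⟩ := Pi_oneD a 1 ha one_pos
  have := h 1 0 one_pos le_rfl
  constructor
  simp only [mul_zero, add_zero, Real.one_rpow, ENNReal.ofReal_one, lintegral_one] at this
  exact this.trans_lt ENNReal.ofReal_lt_top

lemma Pi_ae (a : ℝ) : ∀ᵐ u ∂(PiMeasure a), u ∈ Icc (-1:ℝ) 1 := by
  by_cases h : a = -(1 / 2)
  · simp only [PiMeasure, h, if_true]
    apply Measure.ae_smul_measure
    rw [ae_add_measure_iff]
    constructor
    · exact (ae_dirac_iff measurableSet_Icc).2 (by norm_num)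
    · exact (ae_dirac_iff measurableSet_Icc).2 (by norm_num)
  · simp only [PiMeasure, h, if_false]
    exact (withDensity_absolutelyContinuous _ _).ae_le (ae_restrict_mem measurableSet_Icc)

/-- the crucial double integral bound in terms of `q0`, `S`, `K` -/
lemma Pi_twoD (α β : ℝ) (hα : -(1 / 2) ≤ α) (hβ : -(1 / 2) ≤ β) : ∃ C : ℝ, 0 < C ∧
    ∀ q0 S K : ℝ, 0 < q0 → 0 ≤ S → 0 ≤ K →
    ∫⁻ u, ∫⁻ v, ENNReal.ofReal ((q0 + (1 - u) * S + (1 - v) * K) ^ (-(α + β + 3 / 2)))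
      ∂(PiMeasure β) ∂(PiMeasure α)
      ≤ ENNReal.ofReal (C * (q0 ^ (-(1 / 2) : ℝ) * (q0 + S) ^ (-(α + 1 / 2)) *
          (q0 + K) ^ (-(β + 1 / 2)))) := by
  obtain ⟨C1, hC1, h1⟩ := Pi_oneD β (α + 1) hβ (by linarith)
  obtain ⟨C2, hC2, h2⟩ := Pi_oneD α (1 / 2) hα (by norm_num)
  refine ⟨C1 * C2, by positivity, ?_⟩
  intro q0 S K hq hS hK
  have e1 : -(α + β + 3 / 2) = -(β + 1 / 2 + (α + 1)) := by ring
  calc _ ≤ ∫⁻ u, ENNReal.ofReal (C1 * (q0 + K) ^ (-(β + 1 / 2))) *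
        ENNReal.ofReal ((q0 + (1 - u) * S) ^ (-(α + 1 / 2 + 1 / 2))) ∂(PiMeasure α) := by
        apply lintegral_mono_ae
        filter_upwards [Pi_ae α] with u hu
        have hu0 : 0 ≤ (1 - u) * S := mul_nonneg (by linarith [hu.2]) hS
        rw [e1]
        refine (h1 (q0 + (1 - u) * S) K (by linarith) hK).trans ?_
        rw [← ENNReal.ofReal_mul (by positivity)]
        apply ENNReal.ofReal_le_ofReal
        have e2 : -(α + 1 / 2 + 1 / 2) = -(α + 1) := by ring
        rw [e2]
        have : (q0 + (1 - u) * S + K) ^ (-(β + 1 / 2)) ≤ (q0 + K) ^ (-(β + 1 / 2)) :=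
          Real.rpow_le_rpow_of_nonpos (by linarith) (by linarith) (by linarith)
        calc _ ≤ C1 * ((q0 + (1 - u) * S) ^ (-(α + 1)) * (q0 + K) ^ (-(β + 1 / 2))) := by gcongr
          _ = _ := by ring
    _ = ENNReal.ofReal (C1 * (q0 + K) ^ (-(β + 1 / 2))) * ∫⁻ u,
        ENNReal.ofReal ((q0 + (1 - u) * S) ^ (-(α + 1 / 2 + 1 / 2))) ∂(PiMeasure α) := by
        rw [lintegral_const_mul' _ _ ENNReal.ofReal_ne_top]
    _ ≤ ENNReal.ofReal (C1 * (q0 + K) ^ (-(β + 1 / 2))) *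
        ENNReal.ofReal (C2 * (q0 ^ (-(1 / 2) : ℝ) * (q0 + S) ^ (-(α + 1 / 2)))) := by
        gcongr
        exact h2 q0 S hq hS
    _ = _ := by
        rw [← ENNReal.ofReal_mul (by positivity)]
        congr 1
        ring

lemma jac_apply (α β θ r : ℝ) : jacobiMeasure α β (jacobiBall θ r) =
    ∫⁻ φ in jacobiBall θ r, ENNReal.ofReal
      (Real.sin (φ / 2) ^ (2 * α + 1) * Real.cos (φ / 2) ^ (2 * β + 1)) := by
  have hm : MeasurableSet (jacobiBall θ r) := measurableSet_Ioo.inter measurableSet_Ioo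
  unfold jacobiMeasure
  rw [withDensity_apply _ hm, Measure.restrict_restrict hm]
  congr 2
  unfold jacobiBall
  rw [inter_assoc, inter_self]

lemma half_pos_trig (φ : ℝ) (h : φ ∈ Ioo 0 π) : 0 < Real.sin (φ / 2) ∧ 0 < Real.cos (φ / 2) := by
  obtain ⟨h1, h2⟩ := h
  exact ⟨Real.sin_pos_of_pos_of_lt_pi (by linarith) (by linarith),
    Real.cos_pos_of_mem_Ioo ⟨by linarith, by linarith⟩⟩

lemma jac_upper (α β θ r : ℝ) (hα : -(1 / 2) ≤ α) (hβ : -(1 / 2) ≤ β) (hr : 0 < r)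
    (hθ : θ ∈ Ioo 0 π) : jacobiMeasure α β (jacobiBall θ r) ≤
    ENNReal.ofReal (2 * r * ((Real.sin (θ / 2) + r) ^ (2 * α + 1) *
      (Real.cos (θ / 2) + r) ^ (2 * β + 1))) := by
  have hm : MeasurableSet (jacobiBall θ r) := measurableSet_Ioo.inter measurableSet_Ioo
  obtain ⟨hs, hc⟩ := half_pos_trig θ hθ
  rw [jac_apply]
  calc _ ≤ ∫⁻ φ in jacobiBall θ r, ENNReal.ofReal ((Real.sin (θ / 2) + r) ^ (2 * α + 1) *
      (Real.cos (θ / 2) + r) ^ (2 * β + 1)) := by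
        apply setLIntegral_mono' hm
        intro φ hφ
        obtain ⟨hs', hc'⟩ := half_pos_trig φ hφ.2
        obtain ⟨l1, l2⟩ := hφ.1
        have hd : |φ / 2 - θ / 2| ≤ r := by
          rw [abs_le]; constructor <;> linarith
        have i1 : Real.sin (φ / 2) ≤ Real.sin (θ / 2) + r := by
          have := Real.abs_sin_sub_sin_le (φ / 2) (θ / 2)
          have := le_abs_self (Real.sin (φ / 2) - Real.sin (θ / 2))
          linarith
        have i2 : Real.cos (φ / 2) ≤ Real.cos (θ / 2) + r := by
          have := Real.abs_cos_sub_cos_le (φ / 2) (θ / 2)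
          have := le_abs_self (Real.cos (φ / 2) - Real.cos (θ / 2))
          linarith
        apply ENNReal.ofReal_le_ofReal
        have e1 : 0 ≤ 2 * α + 1 := by linarith
        have e2 : 0 ≤ 2 * β + 1 := by linarith
        gcongr
    _ = ENNReal.ofReal ((Real.sin (θ / 2) + r) ^ (2 * α + 1) *
      (Real.cos (θ / 2) + r) ^ (2 * β + 1)) * volume (jacobiBall θ r) := by
        rw [setLIntegral_const]
    _ ≤ ENNReal.ofReal ((Real.sin (θ / 2) + r) ^ (2 * α + 1) *
      (Real.cos (θ / 2) + r) ^ (2 * β + 1)) * ENNReal.ofReal (2 * r) := by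
        gcongr
        refine (measure_mono inter_subset_left).trans ?_
        rw [Real.volume_Ioo]
        apply ENNReal.ofReal_le_ofReal; linarith
    _ = _ := by
        rw [← ENNReal.ofReal_mul (by positivity)]
        congr 1; ring

lemma jac_pos (α β θ r : ℝ) (hr : 0 < r) (hθ : θ ∈ Ioo 0 π) :
    0 < jacobiMeasure α β (jacobiBall θ r) := by
  have hm : MeasurableSet (jacobiBall θ r) := measurableSet_Ioo.inter measurableSet_Ioo
  rw [jac_apply, setLIntegral_pos_iff (by fun_prop)]
  have hsub : jacobiBall θ r ⊆ (Function.support fun φ => ENNReal.ofReal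
      (Real.sin (φ / 2) ^ (2 * α + 1) * Real.cos (φ / 2) ^ (2 * β + 1))) := by
    intro φ hφ
    obtain ⟨hs', hc'⟩ := half_pos_trig φ hφ.2
    rw [Function.mem_support]
    have : 0 < Real.sin (φ / 2) ^ (2 * α + 1) * Real.cos (φ / 2) ^ (2 * β + 1) := by positivity
    simpa using this
  rw [inter_eq_self_of_subset_right hsub]
  apply IsOpen.measure_pos _ (isOpen_Ioo.inter isOpen_Ioo)
  exact ⟨θ, ⟨by linarith, by linarith⟩, hθ⟩

lemma q0_lower (θ ψ : ℝ) (hθ : θ ∈ Ioo 0 π) (hψ : ψ ∈ Ioo 0 π) :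
    |θ - ψ| ^ 2 / 32 ≤ qfun θ ψ 1 1 := by
  have e : qfun θ ψ 1 1 = 1 - Real.cos ((θ - ψ) / 2) := by
    unfold qfun
    have : (θ - ψ) / 2 = θ / 2 - ψ / 2 := by ring
    rw [this, Real.cos_sub]; ring
  have h := Real.cos_le_one_sub_mul_cos_sq (x := (θ - ψ) / 2) (by
    rw [abs_le]; constructor <;> linarith [hθ.1, hθ.2, hψ.1, hψ.2])
  rw [e, sq_abs]
  have hpi : 2 / (16:ℝ) ≤ 2 / π ^ 2 := by
    have := Real.pi_pos
    have := Real.pi_le_four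
    gcongr
    nlinarith
  nlinarith [sq_nonneg ((θ - ψ) / 2)]

lemma rpow_neg_sq_bound (x y p : ℝ) (hy : 0 < y) (hp : -(1 / 2) ≤ p) (h : (y / 9) ^ 2 ≤ x) :
    x ^ (-(p + 1 / 2)) * y ^ (2 * p + 1) ≤ 9 ^ (2 * p + 1) := by
  have h1 : x ^ (-(p + 1 / 2)) ≤ ((y / 9) ^ 2) ^ (-(p + 1 / 2)) :=
    Real.rpow_le_rpow_of_nonpos (by positivity) h (by linarith)
  have h2 : ((y / 9) ^ 2) ^ (-(p + 1 / 2)) = (y / 9) ^ (-(2 * p + 1)) := by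
    rw [← Real.rpow_natCast, ← Real.rpow_mul (by positivity)]
    congr 1; push_cast; ring
  have h3 : (y / 9) ^ (-(2 * p + 1)) = (y ^ (2 * p + 1) / 9 ^ (2 * p + 1))⁻¹ := by
    rw [Real.rpow_neg (by positivity), Real.div_rpow hy.le (by norm_num)]
  rw [h2, h3] at h1
  have hyp : 0 < y ^ (2 * p + 1) := by positivity
  calc _ ≤ (y ^ (2 * p + 1) / 9 ^ (2 * p + 1))⁻¹ * y ^ (2 * p + 1) := by gcongr
    _ = _ := by field_simp

lemma core_bound (α β : ℝ) (hα : -(1 / 2) ≤ α) (hβ : -(1 / 2) ≤ β) : ∃ C : ℝ, 0 < C ∧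
    ∀ θ ∈ Ioo (0 : ℝ) π, ∀ ψ ∈ Ioo (0 : ℝ) π, θ ≠ ψ →
    ∫⁻ u, ∫⁻ v, ENNReal.ofReal (qfun θ ψ u v ^ (-(α + β + 3 / 2)))
      ∂(PiMeasure β) ∂(PiMeasure α)
      ≤ ENNReal.ofReal (C / (jacobiMeasure α β (jacobiBall θ |θ - ψ|)).toReal) := by
  obtain ⟨C, hC, h⟩ := Pi_twoD α β hα hβ
  refine ⟨C * (2 * 9 * 9 ^ (2 * α + 1) * 9 ^ (2 * β + 1)), by positivity, ?_⟩
  intro θ hθ ψ hψ hne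
  have hr : 0 < |θ - ψ| := abs_pos.2 (sub_ne_zero.2 hne)
  have hlow := q0_lower θ ψ hθ hψ
  set r := |θ - ψ| with hrdef
  obtain ⟨hs, hc⟩ := half_pos_trig θ hθ
  obtain ⟨hs', hc'⟩ := half_pos_trig ψ hψ
  set m := (jacobiMeasure α β (jacobiBall θ r)).toReal with hm
  have hup := jac_upper α β θ r hα hβ hr hθ
  have hmpos : 0 < m := ENNReal.toReal_pos (jac_pos α β θ r hr hθ).ne'
    (hup.trans_lt ENNReal.ofReal_lt_top).ne
  have hmle : m ≤ 2 * r * ((Real.sin (θ / 2) + r) ^ (2 * α + 1) *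
      (Real.cos (θ / 2) + r) ^ (2 * β + 1)) := by
    apply ENNReal.toReal_le_of_le_ofReal (by positivity) hup
  have hs2 := Real.sin_sq_add_cos_sq (θ / 2)
  have hs2' := Real.sin_sq_add_cos_sq (ψ / 2)
  set s := Real.sin (θ / 2) with hsd
  set c := Real.cos (θ / 2) with hcd
  set s' := Real.sin (ψ / 2) with hsd'
  set c' := Real.cos (ψ / 2) with hcd'
  set q0 := qfun θ ψ 1 1 with hq0
  have hq0e : q0 = 1 - s * s' - c * c' := by simp only [hq0, qfun]; ring
  have hq0pos : 0 < q0 := lt_of_lt_of_le (by positivity) hlow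
  have hs1 : s ≤ 1 := Real.sin_le_one _
  have hc1 : c ≤ 1 := Real.cos_le_one _
  have hs1' : s' ≤ 1 := Real.sin_le_one _
  have hc1' : c' ≤ 1 := Real.cos_le_one _
  have hS : ((s + r) / 9) ^ 2 ≤ q0 + s * s' := by
    have a1 : s ^ 2 / 2 ≤ q0 + s * s' := by nlinarith
    have a2 : r ^ 2 / 32 ≤ q0 + s * s' := by nlinarith
    nlinarith [sq_nonneg (s - r)]
  have hK : ((c + r) / 9) ^ 2 ≤ q0 + c * c' := by
    have a1 : c ^ 2 / 2 ≤ q0 + c * c' := by nlinarith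
    have a2 : r ^ 2 / 32 ≤ q0 + c * c' := by nlinarith
    nlinarith [sq_nonneg (c - r)]
  have hsr : 0 < s + r := by linarith
  have hcr : 0 < c + r := by linarith
  have b0 : q0 ^ (-(1 / 2) : ℝ) * r ≤ 9 := by
    have := rpow_neg_sq_bound q0 r 0 hr (by norm_num) (by nlinarith)
    simpa using this
  have gen : ∀ p x y : ℝ, -(1/2) ≤ p → 0 < y → (y / 9) ^ 2 ≤ x →
      x ^ (-(p + 1 / 2)) * y ^ (2 * p + 1) ≤ 9 ^ (2 * p + 1) := by
    intro p x y hp hy hxy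
    exact rpow_neg_sq_bound x y p hy hp hxy
  have b1 := gen α _ _ hα hsr hS
  have b2 := gen β _ _ hβ hcr hK
  have h3 := h q0 (s * s') (c * c') hq0pos (by positivity) (by positivity)
  have e : ∀ u v : ℝ, q0 + (1 - u) * (s * s') + (1 - v) * (c * c') = qfun θ ψ u v := by
    intro u v
    rw [hq0e]; unfold qfun; ring
  simp only [e] at h3
  refine h3.trans (ENNReal.ofReal_le_ofReal ?_)
  rw [le_div_iff₀ hmpos]
  have p1 : 0 ≤ (q0 + s * s') ^ (-(α + 1 / 2)) := by positivity
  have p2 : 0 ≤ (q0 + c * c') ^ (-(β + 1 / 2)) := by positivity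
  calc _ ≤ C * (q0 ^ (-(1 / 2) : ℝ) * (q0 + s * s') ^ (-(α + 1 / 2)) *
          (q0 + c * c') ^ (-(β + 1 / 2))) * (2 * r * ((s + r) ^ (2 * α + 1) *
      (c + r) ^ (2 * β + 1))) := by gcongr
    _ = C * (2 * (q0 ^ (-(1 / 2) : ℝ) * r) * ((q0 + s * s') ^ (-(α + 1 / 2)) * (s + r) ^ (2 * α + 1))
       * ((q0 + c * c') ^ (-(β + 1 / 2)) * (c + r) ^ (2 * β + 1))) := by ring
    _ ≤ _ := by gcongr

/-- `∂_θ q` -/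
noncomputable def dq (θ ψ u v : ℝ) : ℝ :=
  -(u * Real.cos (θ / 2) * Real.sin (ψ / 2) - v * Real.sin (θ / 2) * Real.cos (ψ / 2)) / 2

lemma qfun_hasDerivAt (θ ψ u v : ℝ) : HasDerivAt (fun θ' => qfun θ' ψ u v) (dq θ ψ u v) θ := by
  have h0 : HasDerivAt (fun x : ℝ => x / 2) (1 / 2) θ := (hasDerivAt_id θ).div_const 2
  have h1 := (((h0.sin.const_mul u).mul_const (Real.sin (ψ / 2))).const_sub 1).sub
    ((h0.cos.const_mul v).mul_const (Real.cos (ψ / 2)))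
  refine h1.congr_deriv ?_
  unfold dq
  ring

lemma q_dq (θ ψ u v : ℝ) (hu : u ∈ Icc (-1:ℝ) 1) (hv : v ∈ Icc (-1:ℝ) 1) :
    0 ≤ qfun θ ψ u v ∧ qfun θ ψ u v ≤ 2 ∧ dq θ ψ u v ^ 2 ≤ qfun θ ψ u v / 2 := by
  have hs2 := Real.sin_sq_add_cos_sq (θ / 2)
  have hs2' := Real.sin_sq_add_cos_sq (ψ / 2)
  have hu2 : u ^ 2 ≤ 1 := by nlinarith [hu.1, hu.2]
  have hv2 : v ^ 2 ≤ 1 := by nlinarith [hv.1, hv.2]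
  unfold qfun dq
  set s := Real.sin (θ / 2)
  set c := Real.cos (θ / 2)
  set s' := Real.sin (ψ / 2)
  set c' := Real.cos (ψ / 2)
  have hab : (u * s') ^ 2 + (v * c') ^ 2 ≤ 1 := by
    nlinarith [mul_nonneg (sub_nonneg.2 hu2) (sq_nonneg s'),
      mul_nonneg (sub_nonneg.2 hv2) (sq_nonneg c')]
  have hid : (u * s * s' + v * c * c') ^ 2 + (u * c * s' - v * s * c') ^ 2 =
      (u * s') ^ 2 + (v * c') ^ 2 := by
    calc _ = ((u * s') ^ 2 + (v * c') ^ 2) * (s ^ 2 + c ^ 2) := by ring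
      _ = _ := by rw [hs2, mul_one]
  have hX : (u * s * s' + v * c * c') ^ 2 ≤ 1 := by nlinarith [sq_nonneg (u * c * s' - v * s * c')]
  obtain ⟨hX1, hX2⟩ := abs_le.1 ((sq_le_one_iff_abs_le_one _).1 hX)
  refine ⟨by linarith, by linarith, ?_⟩
  nlinarith

lemma q_ge_q0 (θ ψ u v : ℝ) (hθ : θ ∈ Ioo 0 π) (hψ : ψ ∈ Ioo 0 π) (hu : u ∈ Icc (-1:ℝ) 1)
    (hv : v ∈ Icc (-1:ℝ) 1) : |θ - ψ| ^ 2 / 32 ≤ qfun θ ψ u v := by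
  refine (q0_lower θ ψ hθ hψ).trans ?_
  obtain ⟨hs, hc⟩ := half_pos_trig θ hθ
  obtain ⟨hs', hc'⟩ := half_pos_trig ψ hψ
  unfold qfun
  have h1 := mul_nonneg (mul_nonneg (sub_nonneg.2 hu.2) hs.le) hs'.le
  have h2 := mul_nonneg (mul_nonneg (sub_nonneg.2 hv.2) hc.le) hc'.le
  nlinarith

lemma weight_bound (t q L : ℝ) (ht : 0 < t) (hq : 0 < q) (hq2 : q ≤ 2) (hL : 1 ≤ L) :
    Real.exp (t * (L - 1) / 2) * Real.sinh (t / 2) * (1 / (Real.cosh (t / 2) - 1 + q) ^ L) ≤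
      4 ^ L * q ^ (-(L - 1 / 2)) := by
  have hcs := Real.cosh_sq (t / 2)
  have hsh : 0 < Real.sinh (t / 2) := Real.sinh_pos_iff.2 (by linarith)
  have hA : 0 < Real.cosh (t / 2) - 1 := by
    have := Real.one_lt_cosh.2 (show t / 2 ≠ 0 by positivity)
    linarith
  have hce : Real.exp (t / 2) ≤ 2 * Real.cosh (t / 2) := by
    rw [Real.cosh_eq]
    have := Real.exp_pos (-(t / 2))
    linarith
  set A := Real.cosh (t / 2) - 1 with hAd
  have hch : Real.cosh (t / 2) = A + 1 := by rw [hAd]; ring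
  rw [hch] at hcs hce
  set σ := Real.sinh (t / 2)
  have hD : 0 < A + q := by linarith
  have h1 : Real.exp (t / 2) ≤ 4 * (A + q) / q := by
    rw [le_div_iff₀ hq]
    nlinarith
  have h2 : Real.exp (t * (L - 1) / 2) ≤ (4 * (A + q) / q) ^ (L - 1) := by
    have : t * (L - 1) / 2 = t / 2 * (L - 1) := by ring
    rw [this, Real.exp_mul]
    exact Real.rpow_le_rpow (Real.exp_pos _).le h1 (by linarith)
  have h3 : σ ≤ 4 * (A + q) / Real.sqrt q := by
    have hsq : 0 < Real.sqrt q := Real.sqrt_pos.2 hq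
    rw [le_div_iff₀ hsq]
    apply abs_le_of_sq_le_sq' _ (by positivity) |>.2
    rw [mul_pow, Real.sq_sqrt hq.le]
    nlinarith [mul_pos hA hq, mul_pos hA hA, mul_nonneg (mul_pos hA hA).le (sub_nonneg.2 hq2)]
  calc _ ≤ (4 * (A + q) / q) ^ (L - 1) * (4 * (A + q) / Real.sqrt q) * (1 / (A + q) ^ L) := by
        gcongr
    _ = _ := by
        have e1 : q ^ (-(L - 1 / 2)) = (q ^ (L - 1) * Real.sqrt q)⁻¹ := by
          rw [Real.rpow_neg hq.le, Real.sqrt_eq_rpow, ← Real.rpow_add hq]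
          congr 2; ring
        have e2 : (4:ℝ) ^ L = 4 ^ (L - 1) * 4 := by
          rw [Real.rpow_sub_one (by norm_num)]; ring
        have e3 : (A + q) ^ L = (A + q) ^ (L - 1) * (A + q) := by
          rw [Real.rpow_sub_one hD.ne']; field_simp
        rw [Real.div_rpow (by positivity) hq.le, Real.mul_rpow (by norm_num) hD.le, e1, e2, e3]
        have := Real.sqrt_pos.2 hq
        have : 0 < (A + q) ^ (L - 1) := by positivity
        have : 0 < q ^ (L - 1) := by positivity
        field_simp

/-- derivative of the integrand -/
noncomputable def fd (A L θ ψ u v : ℝ) : ℝ :=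
  -(L * dq θ ψ u v / (A + qfun θ ψ u v)) * (1 / (A + qfun θ ψ u v) ^ L)

lemma f_hasDerivAt (A L θ ψ u v : ℝ) (hA : 0 < A) (hu : u ∈ Icc (-1:ℝ) 1)
    (hv : v ∈ Icc (-1:ℝ) 1) :
    HasDerivAt (fun θ' => 1 / (A + qfun θ' ψ u v) ^ L) (fd A L θ ψ u v) θ := by
  have hq := (q_dq θ ψ u v hu hv).1
  have hD : 0 < A + qfun θ ψ u v := by linarith
  have h1 := ((qfun_hasDerivAt θ ψ u v).const_add A).rpow_const (p := L) (Or.inl hD.ne')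
  have hp : 0 < (A + qfun θ ψ u v) ^ L := by positivity
  have h2 := h1.fun_inv hp.ne'
  simp only [one_div]
  refine h2.congr_deriv ?_
  unfold fd
  rw [Real.rpow_sub_one hD.ne']
  field_simp

lemma fd_bound (A L θ ψ u v : ℝ) (hA : 0 < A) (hL : 1 ≤ L) (hu : u ∈ Icc (-1:ℝ) 1)
    (hv : v ∈ Icc (-1:ℝ) 1) : |fd A L θ ψ u v| ≤ L / A * (1 / A ^ L) := by
  obtain ⟨hq, hq2, hdq⟩ := q_dq θ ψ u v hu hv
  have hd1 : |dq θ ψ u v| ≤ 1 := by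
    rw [← sq_le_one_iff_abs_le_one]; linarith
  unfold fd
  have hD : 0 < A + qfun θ ψ u v := by linarith
  rw [abs_mul, abs_neg, abs_div, abs_mul, abs_of_pos hD, abs_of_pos (by linarith : 0 < L),
    abs_of_pos (show 0 < 1 / (A + qfun θ ψ u v) ^ L by positivity)]
  gcongr
  · nlinarith
  · linarith
  · linarith

lemma fd_bound2 (A L θ ψ u v : ℝ) (hA : 0 < A) (hL : 1 ≤ L) (hθ : θ ∈ Ioo 0 π)
    (hψ : ψ ∈ Ioo 0 π) (hne : θ ≠ ψ) (hu : u ∈ Icc (-1:ℝ) 1) (hv : v ∈ Icc (-1:ℝ) 1) :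
    |fd A L θ ψ u v| ≤ 4 * L / |θ - ψ| * (1 / (A + qfun θ ψ u v) ^ L) := by
  obtain ⟨hq, hq2, hdq⟩ := q_dq θ ψ u v hu hv
  have hlow := q_ge_q0 θ ψ u v hθ hψ hu hv
  have hr : 0 < |θ - ψ| := abs_pos.2 (sub_ne_zero.2 hne)
  have hD : 0 < A + qfun θ ψ u v := by linarith
  have key : |dq θ ψ u v| * |θ - ψ| ≤ 4 * (A + qfun θ ψ u v) := by
    apply abs_le_of_sq_le_sq' _ (by positivity) |>.2
    rw [mul_pow, sq_abs (dq θ ψ u v)]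
    calc _ ≤ (qfun θ ψ u v / 2) * (32 * qfun θ ψ u v) := by
          gcongr
          linarith
      _ ≤ _ := by nlinarith
  unfold fd
  rw [abs_mul, abs_neg, abs_div, abs_mul, abs_of_pos hD, abs_of_pos (by linarith : 0 < L),
    abs_of_pos (show 0 < 1 / (A + qfun θ ψ u v) ^ L by positivity)]
  gcongr ?_ * _
  rw [div_le_div_iff₀ hD hr]
  nlinarith

lemma int_hasDerivAt (α β A L θ ψ : ℝ) (hα : -(1 / 2) ≤ α) (hβ : -(1 / 2) ≤ β) (hA : 0 < A)
    (hL : 1 ≤ L) :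
    HasDerivAt (fun θ' => ∫ u, ∫ v, 1 / (A + qfun θ' ψ u v) ^ L ∂(PiMeasure β) ∂(PiMeasure α))
      (∫ u, ∫ v, fd A L θ ψ u v ∂(PiMeasure β) ∂(PiMeasure α)) θ := by
  have := Pi_finite α hα
  have := Pi_finite β hβ
  have hae : ∀ᵐ z ∂((PiMeasure α).prod (PiMeasure β)), z.1 ∈ Icc (-1:ℝ) 1 ∧ z.2 ∈ Icc (-1:ℝ) 1 := by
    have h1 := Measure.quasiMeasurePreserving_fst (μ := PiMeasure α) (ν := PiMeasure β) |>.ae (Pi_ae α)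
    have h2 := Measure.quasiMeasurePreserving_snd (μ := PiMeasure α) (ν := PiMeasure β) |>.ae (Pi_ae β)
    filter_upwards [h1, h2] with z h1 h2 using ⟨h1, h2⟩
  have hmeas : ∀ x, Measurable (fun z : ℝ × ℝ => 1 / (A + qfun x ψ z.1 z.2) ^ L) := by
    intro x
    unfold qfun
    fun_prop
  have hmeas' : ∀ x, Measurable (fun z : ℝ × ℝ => fd A L x ψ z.1 z.2) := by
    intro x
    unfold fd dq qfun
    fun_prop
  have hint : ∀ x, Integrable (fun z : ℝ × ℝ => 1 / (A + qfun x ψ z.1 z.2) ^ L)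
      ((PiMeasure α).prod (PiMeasure β)) := by
    intro x
    refine Integrable.of_bound (hmeas x).aestronglyMeasurable (1 / A ^ L) ?_
    filter_upwards [hae] with z hz
    obtain ⟨hq, hq2, hdq⟩ := q_dq x ψ z.1 z.2 hz.1 hz.2
    have hD : 0 < A + qfun x ψ z.1 z.2 := by linarith
    rw [Real.norm_eq_abs, abs_of_pos (by positivity)]
    gcongr
    linarith
  have main := hasDerivAt_integral_of_dominated_loc_of_deriv_le
    (μ := (PiMeasure α).prod (PiMeasure β)) (x₀ := θ) (s := univ)
    (F := fun x z => 1 / (A + qfun x ψ z.1 z.2) ^ L) (F' := fun x z => fd A L x ψ z.1 z.2)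
    (bound := fun _ => L / A * (1 / A ^ L)) Filter.univ_mem
    (Filter.Eventually.of_forall fun x => (hmeas x).aestronglyMeasurable) (hint θ)
    (hmeas' θ).aestronglyMeasurable
    (by
      filter_upwards [hae] with z hz x _
      exact fd_bound A L x ψ z.1 z.2 hA hL hz.1 hz.2)
    (integrable_const _)
    (by
      filter_upwards [hae] with z hz x _
      exact f_hasDerivAt A L x ψ z.1 z.2 hA hz.1 hz.2)
  have h2 := main.2
  rw [integral_prod _ main.1] at h2
  have e : (fun θ' => ∫ u, ∫ v, 1 / (A + qfun θ' ψ u v) ^ L ∂(PiMeasure β) ∂(PiMeasure α)) =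
      fun θ' => ∫ z, 1 / (A + qfun θ' ψ z.1 z.2) ^ L ∂((PiMeasure α).prod (PiMeasure β)) := by
    funext x
    rw [integral_prod _ (hint x)]
  rw [e]
  exact h2

/-- iterated integrals are controlled by iterated lower integrals of a majorant -/
lemma iter_bound (μ ν : Measure ℝ) (f g : ℝ → ℝ → ℝ) (E M I : ℝ) (hE : 0 ≤ E) (hM : 0 ≤ M)
    (hI : 0 ≤ I)
    (hfg : ∀ᵐ u ∂μ, ∀ᵐ v ∂ν, E * |f u v| ≤ M * g u v)
    (hg : ∫⁻ u, ∫⁻ v, ENNReal.ofReal (g u v) ∂ν ∂μ ≤ ENNReal.ofReal I) :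
    E * |∫ u, ∫ v, f u v ∂ν ∂μ| ≤ M * I := by
  have h1 : ∫ u, ∫ v, E * f u v ∂ν ∂μ = E * ∫ u, ∫ v, f u v ∂ν ∂μ := by
    simp only [integral_const_mul]
  have h2 : E * |∫ u, ∫ v, f u v ∂ν ∂μ| = ‖∫ u, ∫ v, E * f u v ∂ν ∂μ‖ := by
    rw [h1, Real.norm_eq_abs, abs_mul, abs_of_nonneg hE]
  rw [h2]
  have h3 : ‖∫ u, ∫ v, E * f u v ∂ν ∂μ‖ₑ ≤ ENNReal.ofReal (M * I) := by
    calc _ ≤ ∫⁻ u, ‖∫ v, E * f u v ∂ν‖ₑ ∂μ := enorm_integral_le_lintegral_enorm _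
      _ ≤ ∫⁻ u, ENNReal.ofReal M * ∫⁻ v, ENNReal.ofReal (g u v) ∂ν ∂μ := by
          apply lintegral_mono_ae
          filter_upwards [hfg] with u hu
          refine (enorm_integral_le_lintegral_enorm _).trans ?_
          rw [← lintegral_const_mul' _ _ ENNReal.ofReal_ne_top]
          apply lintegral_mono_ae
          filter_upwards [hu] with v hv
          rw [← ENNReal.ofReal_mul hM, ← ofReal_norm]
          apply ENNReal.ofReal_le_ofReal
          rwa [Real.norm_eq_abs, abs_mul, abs_of_nonneg hE]
      _ = ENNReal.ofReal M * ∫⁻ u, ∫⁻ v, ENNReal.ofReal (g u v) ∂ν ∂μ := by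
          rw [lintegral_const_mul' _ _ ENNReal.ofReal_ne_top]
      _ ≤ ENNReal.ofReal M * ENNReal.ofReal I := by gcongr
      _ = _ := by rw [ENNReal.ofReal_mul hM]
  rw [← ofReal_norm] at h3
  exact (ENNReal.ofReal_le_ofReal_iff (by positivity)).1 h3

/-- exponentially weighted growth and gradient estimates for the
Jacobi-Poisson kernel. -/
theorem Hker_exponential_bounds (α β : ℝ) (hα : -(1 / 2) ≤ α) (hβ : -(1 / 2) ≤ β) :
    ∃ C : ℝ, 0 < C ∧
      ∀ t : ℝ, 0 < t →
        ∀ θ ∈ Ioo (0 : ℝ) π, ∀ ψ ∈ Ioo (0 : ℝ) π, θ ≠ ψ →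
          Real.exp (t * (α + β + 1) / 2) * Hker α β t θ ψ
            ≤ C / (jacobiMeasure α β (jacobiBall θ |θ - ψ|)).toReal ∧
          Real.exp (t * (α + β + 1) / 2) * |deriv (fun θ' => Hker α β t θ' ψ) θ|
            ≤ C / (|θ - ψ| * (jacobiMeasure α β (jacobiBall θ |θ - ψ|)).toReal) := by

  obtain ⟨C, hC, hcore⟩ := core_bound α β hα hβ
  set L := α + β + 2 with hLdef
  have hL : 1 ≤ L := by linarith
  set κ := (2 : ℝ) ^ (-L) / (jacobiMeasure α β (Ioo 0 π)).toReal with hκ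
  have hκ0 : 0 ≤ κ := by positivity
  refine ⟨(κ + 1) * (4 * L * 4 ^ L * C), by positivity, ?_⟩
  intro t ht θ hθ ψ hψ hne
  have hI := hcore θ hθ ψ hψ hne
  have hr : 0 < |θ - ψ| := abs_pos.2 (sub_ne_zero.2 hne)
  set m := (jacobiMeasure α β (jacobiBall θ |θ - ψ|)).toReal with hm
  have hm0 : 0 ≤ m := ENNReal.toReal_nonneg
  have hsh : 0 < Real.sinh (t / 2) := Real.sinh_pos_iff.2 (by linarith)
  have hA : 0 < Real.cosh (t / 2) - 1 := by
    have := Real.one_lt_cosh.2 (show t / 2 ≠ 0 by positivity)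
    linarith
  have hexp : Real.exp (t * (α + β + 1) / 2) = Real.exp (t * (L - 1) / 2) := by
    rw [hLdef]; ring_nf
  have e32 : -(α + β + 3 / 2) = -(L - 1 / 2) := by rw [hLdef]; ring
  rw [e32] at hI
  rw [hexp]
  set E := Real.exp (t * (L - 1) / 2) * Real.sinh (t / 2) with hE
  have hE0 : 0 ≤ E := by positivity
  have hqpos : ∀ u ∈ Icc (-1:ℝ) 1, ∀ v ∈ Icc (-1:ℝ) 1, 0 < qfun θ ψ u v := by
    intro u hu v hv
    exact lt_of_lt_of_le (by positivity) (q_ge_q0 θ ψ u v hθ hψ hu hv)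
  have hpt : ∀ u ∈ Icc (-1:ℝ) 1, ∀ v ∈ Icc (-1:ℝ) 1,
      E * (1 / (Real.cosh (t / 2) - 1 + qfun θ ψ u v) ^ L) ≤
        4 ^ L * qfun θ ψ u v ^ (-(L - 1 / 2)) := by
    intro u hu v hv
    exact weight_bound t _ L ht (hqpos u hu v hv) (q_dq θ ψ u v hu hv).2.1 hL
  have B1 : E * |∫ u, ∫ v, 1 / (Real.cosh (t / 2) - 1 + qfun θ ψ u v) ^ L
      ∂(PiMeasure β) ∂(PiMeasure α)| ≤ 4 ^ L * (C / m) := by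
    refine iter_bound _ _ _ _ E (4 ^ L) (C / m) hE0 (by positivity) (by positivity) ?_ hI
    filter_upwards [Pi_ae α] with u hu
    filter_upwards [Pi_ae β] with v hv
    have := hqpos u hu v hv
    rw [abs_of_pos (by positivity)]
    exact hpt u hu v hv
  have B2 : E * |∫ u, ∫ v, fd (Real.cosh (t / 2) - 1) L θ ψ u v
      ∂(PiMeasure β) ∂(PiMeasure α)| ≤ 4 * L / |θ - ψ| * 4 ^ L * (C / m) := by
    refine iter_bound _ _ _ _ E _ (C / m) hE0 (by positivity) (by positivity) ?_ hI
    filter_upwards [Pi_ae α] with u hu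
    filter_upwards [Pi_ae β] with v hv
    have h1 := fd_bound2 (Real.cosh (t / 2) - 1) L θ ψ u v hA hL hθ hψ hne hu hv
    calc _ ≤ E * (4 * L / |θ - ψ| * (1 / (Real.cosh (t / 2) - 1 + qfun θ ψ u v) ^ L)) := by gcongr
      _ = 4 * L / |θ - ψ| * (E * (1 / (Real.cosh (t / 2) - 1 + qfun θ ψ u v) ^ L)) := by ring
      _ ≤ 4 * L / |θ - ψ| * (4 ^ L * qfun θ ψ u v ^ (-(L - 1 / 2))) := by
          exact mul_le_mul_of_nonneg_left (hpt u hu v hv) (by positivity)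
      _ = _ := by ring
  have hH : ∀ x, Hker α β t x ψ = κ * Real.sinh (t / 2) *
      ∫ u, ∫ v, 1 / (Real.cosh (t / 2) - 1 + qfun x ψ u v) ^ L
      ∂(PiMeasure β) ∂(PiMeasure α) := fun x => rfl
  have hder : deriv (fun θ' => Hker α β t θ' ψ) θ = κ * Real.sinh (t / 2) *
      ∫ u, ∫ v, fd (Real.cosh (t / 2) - 1) L θ ψ u v ∂(PiMeasure β) ∂(PiMeasure α) := by
    simp only [hH]
    exact ((int_hasDerivAt α β _ L θ ψ hα hβ hA hL).const_mul _).deriv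
  rw [hder, hH]
  constructor
  · calc _ = κ * (E * ∫ u, ∫ v, 1 / (Real.cosh (t / 2) - 1 + qfun θ ψ u v) ^ L
          ∂(PiMeasure β) ∂(PiMeasure α)) := by rw [hE]; ring
      _ ≤ κ * (E * |∫ u, ∫ v, 1 / (Real.cosh (t / 2) - 1 + qfun θ ψ u v) ^ L
          ∂(PiMeasure β) ∂(PiMeasure α)|) := by
          gcongr
          exact le_abs_self _
      _ ≤ κ * (4 ^ L * (C / m)) := by gcongr
      _ ≤ (κ + 1) * ((4 * L) * (4 ^ L * (C / m))) := by
          have hX : 0 ≤ 4 ^ L * (C / m) := by positivity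
          have hX2 : 4 ^ L * (C / m) ≤ (4 * L) * (4 ^ L * (C / m)) := by nlinarith
          exact mul_le_mul (by linarith) hX2 hX (by linarith)
      _ = _ := by ring
  · calc _ = κ * (E * |∫ u, ∫ v, fd (Real.cosh (t / 2) - 1) L θ ψ u v
          ∂(PiMeasure β) ∂(PiMeasure α)|) := by
          rw [abs_mul, abs_mul, abs_of_nonneg hκ0, abs_of_pos hsh, hE]; ring
      _ ≤ κ * (4 * L / |θ - ψ| * 4 ^ L * (C / m)) := by gcongr
      _ ≤ (κ + 1) * (4 * L / |θ - ψ| * 4 ^ L * (C / m)) := by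
          have hX : 0 ≤ 4 * L / |θ - ψ| * 4 ^ L * (C / m) := by positivity
          gcongr
          linarith
      _ = _ := by field_simp
end
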